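/- Let R be a commutative ring and let C be a compact object of D(R). Then there exists a finitely generated ideal I ⊆ R such that Loc(C) = Loc(R/I). -/

import Mathlib

open CategoryTheory CategoryTheory.Limits CategoryTheory.Pretriangulated ZeroObject

universe w w' v u

section TriangulatedDefs

variable {T : Type u} [Category.{v} T] [Preadditive T] [HasZeroObject T]
  [HasShift T ℤ] [∀ n : ℤ, (shiftFunctor T n).Additive] [Pretriangulated T]

/-- A localizing subcategory of a (pre)triangulated category, encoded as a set of
objects: it is closed under isomorphisms, contains the zero object, is stable
under shifts, closed under cones of distinguished triangles (hence a full
triangulated subcategory), and closed under arbitrary small coproducts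
(phrased via colimit cofans, so that no global existence of coproducts
is needed). -/
structure IsLocalizingSub (S : Set T) : Prop where
  zero_mem : (0 : T) ∈ S
  mem_of_iso : ∀ {x y : T}, (x ≅ y) → x ∈ S → y ∈ S
  shift_mem : ∀ (n : ℤ) {x : T}, x ∈ S → x⟦n⟧ ∈ S
  cone_mem : ∀ (Tr : Triangle T), Tr ∈ distinguishedTriangles →
    Tr.obj₁ ∈ S → Tr.obj₂ ∈ S → Tr.obj₃ ∈ S
  coprod_mem : ∀ {ι : Type w} (f : ι → T) (c : Cofan f), IsColimit c →
    (∀ i, f i ∈ S) → c.pt ∈ S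

/-- A colocalizing subcategory: as `IsLocalizingSub` but with products instead
of coproducts. -/
structure IsColocalizingSub (S : Set T) : Prop where
  zero_mem : (0 : T) ∈ S
  mem_of_iso : ∀ {x y : T}, (x ≅ y) → x ∈ S → y ∈ S
  shift_mem : ∀ (n : ℤ) {x : T}, x ∈ S → x⟦n⟧ ∈ S
  cone_mem : ∀ (Tr : Triangle T), Tr ∈ distinguishedTriangles →
    Tr.obj₁ ∈ S → Tr.obj₂ ∈ S → Tr.obj₃ ∈ S
  prod_mem : ∀ {ι : Type w} (f : ι → T) (c : Fan f), IsLimit c →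
    (∀ i, f i ∈ S) → c.pt ∈ S

/-- `Loc S`: the smallest localizing subcategory containing the set of
objects `S` (the intersection of all localizing subcategories containing it). -/
def Loc (S : Set T) : Set T :=
  ⋂₀ {L : Set T | IsLocalizingSub.{w} L ∧ S ⊆ L}

/-- The right orthogonal of a set of objects. -/
def rightOrth (C : Set T) : Set T :=
  {x : T | ∀ ⦃c : T⦄, c ∈ C → ∀ (g : c ⟶ x), g = 0}

end TriangulatedDefs

section CompactDefs

variable {T : Type u} [Category.{v} T] [Preadditive T]

/-- The canonical comparison map `⨁ᵢ Hom(x, fᵢ) →+ Hom(x, ∐ f)` associated to a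
cofan `c` on a family `f`. -/
noncomputable def cofanHomComparison {ι : Type w} (x : T) (f : ι → T) (c : Cofan f) :
    (Π₀ i, (x ⟶ f i)) →+ (x ⟶ c.pt) :=
  letI := Classical.decEq ι
  DFinsupp.sumAddHom (fun i => AddMonoidHom.mk' (fun φ => φ ≫ c.inj i)
    (fun φ ψ => Preadditive.add_comp _ _ _ φ ψ (c.inj i)))

/-- An object `x` is compact if `Hom(x, -)` commutes with arbitrary small
coproducts, i.e. for every colimit cofan on a family `f`, the canonical map
`⨁ᵢ Hom(x, fᵢ) → Hom(x, ∐ f)` is bijective. -/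
def IsCompactObj (x : T) : Prop :=
  ∀ ⦃ι : Type w⦄ (f : ι → T) (c : Cofan f), IsColimit c →
    Function.Bijective (cofanHomComparison x f c)

end CompactDefs

section DR

variable (R : Type u) [CommRing R] [HasDerivedCategory.{w'} (ModuleCat.{u} R)]

/-- The `R`-module `M`, regarded as an object of the derived category `D(R)`,
as a complex concentrated in degree `0`. -/
noncomputable def smod (M : ModuleCat.{u} R) : DerivedCategory (ModuleCat.{u} R) :=
  (DerivedCategory.singleFunctor (ModuleCat.{u} R) 0).obj M

end DR

open DirectSum

/-!
The category `D(R)` is generated by `R`, so a compact object `C` is a retract of a bounded complex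
of finite free modules. The cone of the complementary idempotent is `C ⊞ C⟦1⟧`, which generates the
same localizing subcategory as `C`, and it is again represented by such a complex `P`.

Whether `P` lies in a localizing subcategory only depends on the ungraded differential module
`⨁ n, P.X n`, that is, on a square-zero matrix `D`, and `D` is defined over a Noetherian subring
`A` of `R`. The ideal is the extension to `R` of the ideal `J` of those scalars of `A` that act
null-homotopically on the differential module `N` given by `D` over `A`.

* Every element of `J` acts as zero on `N` up to homotopy. Splitting off the finitely many
  generators of `J` one at a time through kernels and cokernels of multiplication builds `N` over
  `R` from modules over `R ⧸ J R`.
* Conversely, if `R ⧸ J R` is not built from `N`, the ideals of `A` at which this fails have a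
  maximal element `p ⊇ J`, which is prime. Because `p ⊇ J`, the Cayley–Hamilton theorem shows that
  `N` modulo `p` is not contractible over the residue field, which yields a cycle `v` and a cocycle
  `w` modulo `p` with `w ⬝ᵥ v ∉ p`. Multiplication by `w ⬝ᵥ v` on a module `M` killed by `p` then
  factors through the twist of `M` by `N`, which contradicts the maximality of `p`.
-/

section Telescope

variable {S : Type u} [CommRing S] {G : ℕ → Type u} [∀ n, AddCommGroup (G n)]
  [∀ n, Module S (G n)] {X : Type u} [AddCommGroup X] [Module S X]

/-- The map induced on `⨁ G n` by the transition maps `t` of a sequence of modules. -/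
noncomputable def sequenceShift (t : ∀ n, G n →ₗ[S] G (n + 1)) :
    (⨁ n : ℕ, G n) →ₗ[S] ⨁ n : ℕ, G n :=
  toModule S _ _ fun n => lof S ℕ G (n + 1) ∘ₗ t n

variable (t : ∀ n, G n →ₗ[S] G (n + 1)) (φ : ∀ n, G n →ₗ[S] X)

lemma sequenceShift_lof (n : ℕ) (x : G n) :
    sequenceShift t (lof S _ G n x) = lof S _ G (n + 1) (t n x) := by
  simp [sequenceShift]

lemma sequenceShift_apply_zero (z : ⨁ n : ℕ, G n) : sequenceShift t z 0 = 0 := by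
  induction z using DirectSum.induction_on with
  | zero => simp
  | of n x =>
    rw [← lof_eq_of S, sequenceShift_lof, lof_eq_of, of_eq_of_ne _ _ _ n.succ_ne_zero.symm]
  | add x y hx hy => simp [hx, hy]

lemma sequenceShift_apply_succ (z : ⨁ n : ℕ, G n) (n : ℕ) :
    sequenceShift t z (n + 1) = t n (z n) := by
  induction z using DirectSum.induction_on with
  | zero => simp
  | of m x =>
    rw [← lof_eq_of S, sequenceShift_lof, lof_eq_of, lof_eq_of]
    obtain rfl | h := eq_or_ne n m
    · simp
    · rw [of_eq_of_ne _ _ _ h, of_eq_of_ne _ _ _ (by simpa using h), map_zero]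
  | add x y hx hy => simp [hx, hy]

lemma id_sub_sequenceShift_injective :
    Function.Injective (LinearMap.id - sequenceShift t : _ →ₗ[S] _) := by
  rw [← LinearMap.ker_eq_bot, LinearMap.ker_eq_bot']
  intro z hz
  have hz' : z = sequenceShift t z := sub_eq_zero.1 hz
  have h (n : ℕ) : z n = 0 := by
    induction n with
    | zero => rw [hz', sequenceShift_apply_zero]
    | succ n ih => rw [hz', sequenceShift_apply_succ, ih, map_zero]
  ext n
  exact h n

lemma exists_sub_lof_mem_range (z : ⨁ n : ℕ, G n) :
    ∃ N, ∀ n ≥ N, ∃ x : G n, z - lof S _ G n x ∈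
      LinearMap.range (LinearMap.id - sequenceShift t) := by
  induction z using DirectSum.induction_on with
  | zero => exact ⟨0, fun n _ => ⟨0, by simp⟩⟩
  | of m x =>
    refine ⟨m, fun n hn => ?_⟩
    induction n, hn using Nat.le_induction with
    | base => exact ⟨x, by simp [lof_eq_of]⟩
    | succ n _ ih =>
      obtain ⟨y, hy⟩ := ih
      refine ⟨t n y, ?_⟩
      convert add_mem hy (LinearMap.mem_range_self _ (lof S _ G n y)) using 1
      simp [sequenceShift_lof]
  | add z w hz hw =>
    obtain ⟨N, hN⟩ := hz
    obtain ⟨N', hN'⟩ := hw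
    refine ⟨max N N', fun n hn => ?_⟩
    obtain ⟨x, hx⟩ := hN n (le_of_max_le_left hn)
    obtain ⟨y, hy⟩ := hN' n (le_of_max_le_right hn)
    exact ⟨x + y, by simpa [add_sub_add_comm] using add_mem hx hy⟩

lemma exact_id_sub_sequenceShift (hφt : ∀ n x, φ (n + 1) (t n x) = φ n x)
    (hker : ∀ n x, φ n x = 0 → t n x = 0) :
    Function.Exact (LinearMap.id - sequenceShift t : _ →ₗ[S] _) (toModule S ℕ X φ) := by
  have hcomp : toModule S ℕ X φ ∘ₗ (LinearMap.id - sequenceShift t) = 0 := by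
    ext n x
    simp [sequenceShift_lof, hφt]
  refine fun z => ⟨fun hz => ?_, by rintro ⟨y, rfl⟩; exact LinearMap.congr_fun hcomp y⟩
  obtain ⟨n, hn⟩ := exists_sub_lof_mem_range t z
  obtain ⟨x, y, hy⟩ := hn n le_rfl
  have hx : φ n x = 0 := by
    have := LinearMap.congr_fun hcomp y
    rw [LinearMap.comp_apply, hy] at this
    simpa [hz] using this
  refine ⟨y + lof S _ G n x, ?_⟩
  rw [map_add, hy, LinearMap.sub_apply, sequenceShift_lof, hker n x hx]
  simp

end Telescope

/-- A differential module: an ungraded `S`-module with a square-zero endomorphism. -/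
structure DifferentialModule (S : Type u) [CommRing S] where
  carrier : Type v
  [addCommGroup : AddCommGroup carrier]
  [module : Module S carrier]
  d : carrier →ₗ[S] carrier
  d_d : ∀ x, d (d x) = 0

namespace DifferentialModule

variable {S : Type u} [CommRing S]

instance : CoeSort (DifferentialModule.{v} S) (Type v) := ⟨carrier⟩

instance (M : DifferentialModule S) : AddCommGroup M := M.addCommGroup

instance (M : DifferentialModule S) : Module S M := M.module

attribute [simp] d_d

variable {M N Q X : DifferentialModule.{u} S}

/-- Exactness of a differential module: every cycle is a boundary. -/
def Acyclic (M : DifferentialModule S) : Prop := ∀ x, M.d x = 0 → ∃ y, M.d y = x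

/-- A linear map commuting with the differentials. -/
def IsChainMap (f : M →ₗ[S] N) : Prop := ∀ x, f (M.d x) = N.d (f x)

/-- A short exact sequence `0 → M → N → Q → 0` of differential modules. -/
structure IsShortExact (f : M →ₗ[S] N) (g : N →ₗ[S] Q) : Prop where
  chainMap_left : IsChainMap f
  chainMap_right : IsChainMap g
  injective : Function.Injective f
  exact : Function.Exact f g
  surjective : Function.Surjective g

/-- Multiplication by `b` on `M` is null-homotopic. -/
def IsNullHomotopic (b : S) (M : DifferentialModule S) : Prop :=
  ∃ h : M →ₗ[S] M, ∀ m, b • m = M.d (h m) + h (M.d m)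

/-- An `S`-module with zero differential. -/
abbrev ofModule (S : Type u) [CommRing S] (N : Type u) [AddCommGroup N] [Module S N] :
    DifferentialModule S where
  carrier := N
  d := 0
  d_d _ := rfl

/-- The differential module with the opposite differential. -/
abbrev neg (M : DifferentialModule S) : DifferentialModule S where
  carrier := M
  d := -M.d
  d_d x := by simp

/-- The submodule `p` with the restricted differential. -/
abbrev restrict (M : DifferentialModule S) (p : Submodule S M) (hp : ∀ x ∈ p, M.d x ∈ p) :
    DifferentialModule S where
  carrier := p
  d := M.d.restrict hp
  d_d x := Subtype.ext (M.d_d x)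

/-- The quotient by the submodule `p` with the induced differential. -/
abbrev quotient (M : DifferentialModule S) (p : Submodule S M) (hp : ∀ x ∈ p, M.d x ∈ p) :
    DifferentialModule S where
  carrier := M ⧸ p
  d := p.mapQ p M.d hp
  d_d x := by
    induction x using Submodule.Quotient.induction_on with
    | H x => simp

/-- The direct sum of a family of differential modules. -/
abbrev directSum {ι : Type w} (M : ι → DifferentialModule.{v} S) : DifferentialModule S where
  carrier := ⨁ i, M i
  d := lmap fun i => (M i).d
  d_d x := by ext i; simp

/-- The mapping cone `M ⊕ N` of a chain map `f`, with differential
`(x, y) ↦ (-d x, f x + d y)`. -/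
abbrev cone (f : M →ₗ[S] N) (hf : IsChainMap f) : DifferentialModule S where
  carrier := M × N
  d := (-M.d ∘ₗ .fst S M N).prod (f ∘ₗ .fst S M N + N.d ∘ₗ .snd S M N)
  d_d x := by simp [hf x.1]

lemma isChainMap_id : IsChainMap (LinearMap.id : M →ₗ[S] M) := fun _ => rfl

lemma isShortExact_restrict_quotient (p : Submodule S M) (hp : ∀ x ∈ p, M.d x ∈ p) :
    IsShortExact (M := M.restrict p hp) (Q := M.quotient p hp) p.subtype p.mkQ where
  chainMap_left _ := rfl
  chainMap_right _ := rfl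
  injective := p.injective_subtype
  exact := LinearMap.exact_subtype_mkQ p
  surjective := p.mkQ_surjective

lemma isShortExact_cone (f : M →ₗ[S] N) (hf : IsChainMap f) :
    IsShortExact (N := cone f hf) (Q := M.neg) (.inr S M N) (.fst S M N) where
  chainMap_left y := by ext <;> simp
  chainMap_right x := rfl
  injective := LinearMap.inr_injective
  exact := .inr_fst
  surjective := LinearMap.fst_surjective

lemma acyclic_cone_id : (cone .id (isChainMap_id (M := M))).Acyclic := by
  rintro ⟨x, y⟩ h
  have hx : x = -M.d y := eq_neg_of_add_eq_zero_left (congrArg Prod.snd h)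
  exact ⟨(y, 0), Prod.ext hx.symm (by simp)⟩

/-- A class of differential modules that contains the acyclic ones and is closed under direct sums
and, in short exact sequences, under the two-out-of-three property. -/
structure IsLocalizing (P : Set (DifferentialModule.{u} S)) : Prop where
  acyclic_mem : ∀ {M}, M.Acyclic → M ∈ P
  left_mem : ∀ {M N Q : DifferentialModule.{u} S} {f : M →ₗ[S] N} {g : N →ₗ[S] Q},
    IsShortExact f g → N ∈ P → Q ∈ P → M ∈ P
  middle_mem : ∀ {M N Q : DifferentialModule.{u} S} {f : M →ₗ[S] N} {g : N →ₗ[S] Q},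
    IsShortExact f g → M ∈ P → Q ∈ P → N ∈ P
  right_mem : ∀ {M N Q : DifferentialModule.{u} S} {f : M →ₗ[S] N} {g : N →ₗ[S] Q},
    IsShortExact f g → M ∈ P → N ∈ P → Q ∈ P
  directSum_mem : ∀ {ι : Type u} (M : ι → DifferentialModule.{u} S),
    (∀ i, M i ∈ P) → directSum M ∈ P

namespace IsLocalizing

variable {P : Set (DifferentialModule.{u} S)}

lemma mem_of_subsingleton (hP : IsLocalizing P) [Subsingleton M] : M ∈ P :=
  hP.acyclic_mem fun x _ => ⟨x, Subsingleton.elim _ _⟩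

lemma mem_of_equiv (hP : IsLocalizing P) (e : M ≃ₗ[S] N) (he : IsChainMap e.toLinearMap)
    (hM : M ∈ P) : N ∈ P := by
  have h : IsShortExact (Q := ofModule S PUnit) e.toLinearMap 0 :=
    ⟨he, fun _ => rfl, e.injective, fun y => by simp,
      fun y => ⟨0, Subsingleton.elim _ _⟩⟩
  exact hP.middle_mem h hM hP.mem_of_subsingleton

lemma mem_iff_of_equiv (hP : IsLocalizing P) (e : M ≃ₗ[S] N) (he : IsChainMap e.toLinearMap) :
    M ∈ P ↔ N ∈ P := by
  have he' : IsChainMap e.symm.toLinearMap := fun y =>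
    e.symm_apply_eq.2 <| by simpa using (he (e.symm y)).symm
  exact ⟨hP.mem_of_equiv e he, hP.mem_of_equiv e.symm he'⟩

lemma neg_mem_iff (hP : IsLocalizing P) : M.neg ∈ P ↔ M ∈ P :=
  have h := isShortExact_cone _ (isChainMap_id (M := M))
  have hcone := hP.acyclic_mem (acyclic_cone_id (M := M))
  ⟨fun hM => hP.left_mem h hcone hM, fun hM => hP.right_mem h hM hcone⟩

lemma cone_mem (hP : IsLocalizing P) {f : M →ₗ[S] N} (hf : IsChainMap f) (hM : M ∈ P)
    (hN : N ∈ P) : cone f hf ∈ P :=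
  hP.middle_mem (isShortExact_cone f hf) hN (hP.neg_mem_iff.2 hM)

lemma mem_of_restrict_of_quotient (hP : IsLocalizing P) {p : Submodule S M}
    (hp : ∀ x ∈ p, M.d x ∈ p) (h₁ : M.restrict p hp ∈ P) (h₂ : M.quotient p hp ∈ P) : M ∈ P :=
  hP.middle_mem (isShortExact_restrict_quotient p hp) h₁ h₂

end IsLocalizing

end DifferentialModule

namespace DifferentialModule

variable {S : Type u} [CommRing S] {M N X : DifferentialModule.{u} S}

namespace IsLocalizing

variable {P : Set (DifferentialModule.{u} S)}

/-- `hker` and `hsurj` make `X` the colimit of the sequence `G`, hence the cokernel of `1 - shift`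
on `⨁ n, G n`. -/
lemma mem_of_sequence (hP : IsLocalizing P) {G : ℕ → DifferentialModule.{u} S}
    {t : ∀ n, G n →ₗ[S] G (n + 1)} {φ : ∀ n, G n →ₗ[S] X} (ht : ∀ n, IsChainMap (t n))
    (hφ : ∀ n, IsChainMap (φ n)) (hφt : ∀ n x, φ (n + 1) (t n x) = φ n x)
    (hker : ∀ n x, φ n x = 0 → t n x = 0) (hsurj : ∀ x, ∃ n y, φ n y = x) (hG : ∀ n, G n ∈ P) :
    X ∈ P := by
  have hsum : directSum G ∈ P :=
    hP.mem_of_equiv (M := directSum fun n : ULift.{u} ℕ => G n.down)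
      (lequivCongrLeft S Equiv.ulift) (fun _ => DFinsupp.ext fun _ => rfl)
      (hP.directSum_mem _ fun n => hG n.down)
  have hshift : IsChainMap (M := directSum G) (N := directSum G) (.id - sequenceShift t) := by
    intro x
    rw [← LinearMap.comp_apply, ← LinearMap.comp_apply]
    congr 1
    ext n x : 2
    simp [sequenceShift_lof, ht n x]
  have hto : IsChainMap (M := directSum G) (toModule S ℕ X φ) := by
    intro x
    rw [← LinearMap.comp_apply, ← LinearMap.comp_apply]
    congr 1
    ext n x
    simp [hφ n x]
  refine hP.right_mem ⟨hshift, hto, id_sub_sequenceShift_injective t,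
    exact_id_sub_sequenceShift t φ hφt hker, fun x => ?_⟩ hsum hsum
  obtain ⟨n, y, rfl⟩ := hsurj x
  exact ⟨lof S _ _ n y, toModule_lof _ _ _⟩

lemma mem_of_retract (hP : IsLocalizing P) {s : M →ₗ[S] N} {r : N →ₗ[S] M} (hs : IsChainMap s)
    (hr : IsChainMap r) (hsr : ∀ x, r (s x) = x) (hN : N ∈ P) : M ∈ P :=
  hP.mem_of_sequence (G := fun _ => N) (t := fun _ => s ∘ₗ r) (φ := fun _ => r)
    (fun _ x => by simp [hr x, hs (r x)]) (fun _ => hr) (fun _ x => by simp [hsr])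
    (fun _ x hx => by simp [hx]) (fun x => ⟨0, s x, hsr x⟩) fun _ => hN

lemma mem_of_iUnion (hP : IsLocalizing P) {p : ℕ → Submodule S M}
    (hp : ∀ n, ∀ x ∈ p n, M.d x ∈ p n) (hmono : ∀ n, p n ≤ p (n + 1)) (hunion : ∀ x, ∃ n, x ∈ p n)
    (hmem : ∀ n, M.restrict (p n) (hp n) ∈ P) : M ∈ P :=
  hP.mem_of_sequence (G := fun n => M.restrict (p n) (hp n))
    (t := fun n => Submodule.inclusion (hmono n)) (φ := fun n => (p n).subtype) (fun _ _ => rfl)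
    (fun _ _ => rfl) (fun _ _ => rfl) (fun n x hx => by rw [show x = 0 by simpa using hx, map_zero])
    (fun x => (hunion x).imp fun _ hx => ⟨⟨x, hx⟩, rfl⟩) hmem

lemma mem_of_ofModule_mem (hP : IsLocalizing P) (hker : ofModule S (LinearMap.ker M.d) ∈ P)
    (hrange : ofModule S (LinearMap.range M.d) ∈ P) : M ∈ P :=
  have h : IsShortExact (M := ofModule S (LinearMap.ker M.d))
      (Q := ofModule S (LinearMap.range M.d)) (LinearMap.ker M.d).subtype M.d.rangeRestrict :=
    ⟨fun x => (LinearMap.mem_ker.1 x.2).symm, fun x => Subtype.ext (M.d_d x),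
      Subtype.val_injective, LinearMap.exact_iff.2 (by simp), M.d.surjective_rangeRestrict⟩
  hP.middle_mem h hker hrange

section Resolution

variable {L F : ℕ → Type u} [∀ n, AddCommGroup (L n)] [∀ n, Module S (L n)]
  [∀ n, AddCommGroup (F n)] [∀ n, Module S (F n)]
  (ι : ∀ n, L (n + 1) →ₗ[S] F n) (ε : ∀ n, F n →ₗ[S] L n)

/-- The differential of the resolution `⋯ → F 1 → F 0` spliced from `ι` and `ε`. -/
noncomputable def resolutionD : (⨁ n, F n) →ₗ[S] ⨁ n, F n :=
  toModule S _ _ fun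
    | 0 => 0
    | n + 1 => lof S _ _ n ∘ₗ ι n ∘ₗ ε (n + 1)

/-- The augmentation `⨁ n, F n → F 0 → L 0`. -/
noncomputable def resolutionAugmentation : (⨁ n, F n) →ₗ[S] L 0 := ε 0 ∘ₗ component S _ _ 0

lemma resolutionD_lof_zero (x : F 0) : resolutionD ι ε (lof S _ _ 0 x) = 0 := by
  simp [resolutionD]

lemma resolutionD_lof_succ (n : ℕ) (x : F (n + 1)) :
    resolutionD ι ε (lof S _ _ (n + 1) x) = lof S _ _ n (ι n (ε (n + 1) x)) := by
  simp [resolutionD]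

lemma resolutionD_apply (x : ⨁ n, F n) (n : ℕ) :
    resolutionD ι ε x n = ι n (ε (n + 1) (x (n + 1))) := by
  induction x using DirectSum.induction_on with
  | zero => simp
  | add x y hx hy => simp [hx, hy]
  | of m x =>
    rw [← lof_eq_of S]
    cases m with
    | zero =>
      rw [resolutionD_lof_zero, lof_eq_of, of_eq_of_ne _ _ _ n.succ_ne_zero, map_zero, map_zero]
      rfl
    | succ m =>
      rw [resolutionD_lof_succ, lof_eq_of, lof_eq_of]
      obtain rfl | h := eq_or_ne n m
      · simp
      · rw [of_eq_of_ne _ _ _ h, of_eq_of_ne _ _ _ (by simpa using h), map_zero, map_zero]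

variable {ι ε} (hex : ∀ n, Function.Exact (ι n) (ε n))

/-- The total differential module of the resolution spliced from `ι` and `ε`. -/
noncomputable abbrev resolution : DifferentialModule S where
  carrier := ⨁ n, F n
  d := resolutionD ι ε
  d_d x := by ext n; simp [resolutionD_apply, (hex _).apply_apply_eq_zero]

lemma isChainMap_resolutionAugmentation :
    IsChainMap (M := resolution hex) (N := ofModule S (L 0)) (resolutionAugmentation ε) := fun x =>
  (congrArg (ε 0) (resolutionD_apply ι ε x 0)).trans ((hex 0).apply_apply_eq_zero _)

/-- The truncation `F (n - 1) → ⋯ → F 0` of the resolution. -/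
def resolutionTruncation (n : ℕ) : Submodule S (⨁ n, F n) where
  carrier := {x | ∀ k ≥ n, x k = 0}
  zero_mem' _ _ := rfl
  add_mem' hx hy k hk := by rw [DirectSum.add_apply, hx k hk, hy k hk, add_zero]
  smul_mem' c x hx k hk := by rw [DirectSum.smul_apply, hx k hk, smul_zero]

lemma resolutionTruncation_mono (n : ℕ) :
    resolutionTruncation (S := S) (F := F) n ≤ resolutionTruncation (n + 1) :=
  fun _ hx k hk => hx k (by omega)

lemma exists_mem_resolutionTruncation (x : ⨁ n, F n) :
    ∃ n, x ∈ resolutionTruncation (S := S) n := by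
  classical
  obtain ⟨n, hn⟩ := x.support.bddAbove
  exact ⟨n + 1, fun k hk => by_contra fun h =>
    absurd (hn (DFinsupp.mem_support_iff.2 h)) (by omega)⟩

lemma resolutionD_mem_resolutionTruncation (n : ℕ) (x : ⨁ n, F n)
    (hx : x ∈ resolutionTruncation (S := S) n) :
    resolutionD ι ε x ∈ resolutionTruncation (S := S) n :=
  fun k hk => by rw [resolutionD_apply, hx _ (by omega), map_zero, map_zero]

/-- The truncated resolution as a differential module. -/
noncomputable abbrev truncatedResolution (n : ℕ) : DifferentialModule S :=
  (resolution hex).restrict (resolutionTruncation n) (resolutionD_mem_resolutionTruncation n)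

lemma isShortExact_truncatedResolution (n : ℕ) :
    IsShortExact (M := truncatedResolution hex n) (N := truncatedResolution hex (n + 1))
      (Q := ofModule S (F n)) (Submodule.inclusion (resolutionTruncation_mono n))
      (component S ℕ F n ∘ₗ (resolutionTruncation (n + 1)).subtype) where
  chainMap_left _ := rfl
  chainMap_right x :=
    (resolutionD_apply ι ε x.1 n).trans (by rw [x.2 _ le_rfl, map_zero, map_zero]; rfl)
  injective := Submodule.inclusion_injective _
  exact x := by
    refine ⟨fun hx => ⟨⟨x.1, fun k hk => ?_⟩, rfl⟩, ?_⟩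
    · obtain rfl | hk := hk.eq_or_lt
      · exact hx
      · exact x.2 k hk
    · rintro ⟨y, rfl⟩
      exact y.2 n le_rfl
  surjective x :=
    ⟨⟨lof S _ _ n x, fun k hk => of_eq_of_ne _ _ _ (by omega)⟩, lof_apply S n x⟩

lemma resolution_mem (hP : IsLocalizing P) (hF : ∀ n, ofModule S (F n) ∈ P) :
    resolution hex ∈ P := by
  refine hP.mem_of_iUnion (M := resolution hex) (p := resolutionTruncation)
    resolutionD_mem_resolutionTruncation resolutionTruncation_mono
    (exists_mem_resolutionTruncation (S := S)) fun n => ?_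
  induction n with
  | zero =>
    have : Subsingleton (truncatedResolution hex 0) :=
      ⟨fun x y => Subtype.ext (DFinsupp.ext fun k =>
        (x.2 k k.zero_le).trans (y.2 k k.zero_le).symm)⟩
    exact hP.mem_of_subsingleton
  | succ n ih => exact hP.middle_mem (isShortExact_truncatedResolution hex n) ih (hF n)

lemma acyclic_cone_resolutionAugmentation (hinj : ∀ n, Function.Injective (ι n))
    (hsurj : ∀ n, Function.Surjective (ε n)) :
    (cone _ (isChainMap_resolutionAugmentation hex)).Acyclic := by
  rintro ⟨x, m⟩ h
  have hx : resolutionD ι ε x = 0 := neg_eq_zero.1 (congrArg Prod.fst h)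
  have hx₀ : ε 0 (x 0) = 0 := (add_zero _).symm.trans (congrArg Prod.snd h)
  have hcycle (n : ℕ) : ε n (x n) = 0 := by
    cases n with
    | zero => exact hx₀
    | succ n => exact hinj n (by rw [← resolutionD_apply, hx]; simp)
  have hmem : x ∈ (LinearMap.ker (resolutionAugmentation ε)).map (resolutionD ι ε) := by
    classical
    rw [← sum_support_of x]
    refine Submodule.sum_mem _ fun n _ => ?_
    obtain ⟨y, hy⟩ := (hex n _).1 (hcycle n)
    obtain ⟨z, rfl⟩ := hsurj _ y
    refine ⟨lof S _ _ (n + 1) z, ?_, by rw [resolutionD_lof_succ, hy, lof_eq_of]⟩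
    exact (congrArg (ε 0) (of_eq_of_ne (n + 1) 0 z n.succ_ne_zero.symm)).trans (map_zero _)
  obtain ⟨y, hy, rfl⟩ := hmem
  obtain ⟨z, rfl⟩ := hsurj 0 m
  refine ⟨(lof S _ _ 0 z - y, 0), Prod.ext ?_ ?_⟩
  · simp [resolutionD_lof_zero]
  · simpa [resolutionAugmentation, lof_apply] using hy

lemma ofModule_mem_of_resolution (hP : IsLocalizing P) (hinj : ∀ n, Function.Injective (ι n))
    (hex : ∀ n, Function.Exact (ι n) (ε n)) (hsurj : ∀ n, Function.Surjective (ε n))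
    (hF : ∀ n, ofModule S (F n) ∈ P) : ofModule S (L 0) ∈ P :=
  hP.left_mem (isShortExact_cone _ (isChainMap_resolutionAugmentation hex))
    (hP.acyclic_mem (acyclic_cone_resolutionAugmentation hex hinj hsurj))
    (hP.neg_mem_iff.2 (resolution_mem hex hP hF))

end Resolution

end IsLocalizing

end DifferentialModule

namespace DifferentialModule

variable {S : Type u} [CommRing S] {M N X : DifferentialModule.{u} S}

lemma IsChainMap.map_mem_ker {f : M →ₗ[S] N} (hf : IsChainMap f) :
    ∀ x ∈ LinearMap.ker f, M.d x ∈ LinearMap.ker f := fun x hx => by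
  rw [LinearMap.mem_ker, hf, LinearMap.mem_ker.1 hx, map_zero]

lemma IsChainMap.map_mem_range {f : M →ₗ[S] N} (hf : IsChainMap f) :
    ∀ x ∈ LinearMap.range f, N.d x ∈ LinearMap.range f := by
  rintro _ ⟨x, rfl⟩
  exact ⟨M.d x, hf x⟩

lemma isChainMap_smul_id (b : S) : IsChainMap (b • .id : M →ₗ[S] M) := fun x => by simp

lemma IsNullHomotopic.restrict {b : S} (hb : IsNullHomotopic b M) (c : S) :
    IsNullHomotopic b (M.restrict _ (isChainMap_smul_id c).map_mem_ker) := by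
  obtain ⟨h, hh⟩ := hb
  have hker (x) (hx : x ∈ LinearMap.ker (c • .id : M →ₗ[S] M)) :
      h x ∈ LinearMap.ker (c • .id : M →ₗ[S] M) := by
    simpa using congrArg h (LinearMap.mem_ker.1 hx)
  exact ⟨h.restrict hker, fun x => Subtype.ext (hh x)⟩

lemma IsNullHomotopic.quotient {b : S} (hb : IsNullHomotopic b M) (c : S) :
    IsNullHomotopic b (M.quotient _ (isChainMap_smul_id c).map_mem_range) := by
  obtain ⟨h, hh⟩ := hb
  have hrange : LinearMap.range (c • .id : M →ₗ[S] M) ≤ (LinearMap.range (c • .id)).comap h := by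
    rintro _ ⟨x, rfl⟩
    exact ⟨h x, by simp⟩
  refine ⟨Submodule.mapQ _ _ h hrange, fun x => ?_⟩
  induction x using Submodule.Quotient.induction_on with
  | H x => exact congrArg (Submodule.mkQ _) (hh x)

/-- The direct sum of two differential modules. -/
abbrev prod (M X : DifferentialModule.{u} S) : DifferentialModule S where
  carrier := M × X
  d := M.d.prodMap X.d
  d_d x := by simp

namespace IsLocalizing

variable {P : Set (DifferentialModule.{u} S)}

section Quotient

variable (I : Ideal S)

/-- The canonical surjection onto `N` from a free `S ⧸ I`-module, for `N` killed by `I`. -/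
noncomputable def quotientCover (N : Type u) [AddCommGroup N] [Module S N]
    (hN : I ≤ Module.annihilator S N) : (N →₀ S ⧸ I) →ₗ[S] N :=
  Finsupp.lsum ℕ fun x => I.liftQ (LinearMap.toSpanSingleton S N x) fun _ ha =>
    Module.mem_annihilator.1 (hN ha) x

lemma quotientCover_surjective {N : Type u} [AddCommGroup N] [Module S N]
    (hN : I ≤ Module.annihilator S N) : Function.Surjective (quotientCover I N hN) := fun x =>
  ⟨.single x (Ideal.Quotient.mk I 1), by
    rw [quotientCover, Finsupp.lsum_single]
    exact (I.liftQ_apply _ 1).trans (one_smul S x)⟩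

lemma le_annihilator_ker_quotientCover {N : Type u} [AddCommGroup N] [Module S N]
    (hN : I ≤ Module.annihilator S N) :
    I ≤ Module.annihilator S (LinearMap.ker (quotientCover I N hN)) := fun _ ha =>
  Module.mem_annihilator.2 fun x => Subtype.ext <| Finsupp.ext fun y =>
    Module.mem_annihilator.1 (I.annihilator_quotient.ge ha) (x.1 y)

/-- The iterated syzygies of a module killed by `I`, with respect to `quotientCover`. -/
noncomputable def quotientSyzygy (N : {N : ModuleCat.{u} S // I ≤ Module.annihilator S N}) :
    ℕ → {N : ModuleCat.{u} S // I ≤ Module.annihilator S N}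
  | 0 => N
  | n + 1 => ⟨.of S (LinearMap.ker (quotientCover I _ (quotientSyzygy N n).2)),
      le_annihilator_ker_quotientCover I (quotientSyzygy N n).2⟩

variable {I}

lemma ofModule_finsupp_mem (hP : IsLocalizing P) {N : Type u} [AddCommGroup N] [Module S N]
    (hN : ofModule S N ∈ P) (κ : Type u) : ofModule S (κ →₀ N) ∈ P := by
  classical
  exact hP.mem_of_equiv (M := directSum fun _ : κ => ofModule S N)
    (finsuppLEquivDirectSum S N κ).symm
    (fun x => by rw [show (directSum fun _ : κ => ofModule S N).d x = 0 from by ext; simp]; simp)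
    (hP.directSum_mem _ fun _ => hN)

lemma ofModule_mem_of_quotient (hP : IsLocalizing P) (hI : ofModule S (S ⧸ I) ∈ P) {N : Type u}
    [AddCommGroup N] [Module S N] (hN : I ≤ Module.annihilator S N) : ofModule S N ∈ P :=
  hP.ofModule_mem_of_resolution (L := fun n => (quotientSyzygy I ⟨.of S N, hN⟩ n).1)
    (F := fun n => (quotientSyzygy I ⟨.of S N, hN⟩ n).1 →₀ S ⧸ I)
    (ι := fun n => (LinearMap.ker (quotientCover I _ (quotientSyzygy I ⟨.of S N, hN⟩ n).2)).subtype)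
    (ε := fun n => quotientCover I _ (quotientSyzygy I ⟨.of S N, hN⟩ n).2)
    (fun _ => Subtype.val_injective) (fun _ => LinearMap.exact_subtype_ker_map _)
    (fun n => quotientCover_surjective I (quotientSyzygy I ⟨.of S N, hN⟩ n).2)
    fun _ => hP.ofModule_finsupp_mem hI _

lemma mem_of_quotient (hP : IsLocalizing P) (hI : ofModule S (S ⧸ I) ∈ P)
    (hM : I ≤ Module.annihilator S M) : M ∈ P :=
  hP.mem_of_ofModule_mem
    (hP.ofModule_mem_of_quotient hI
      (hM.trans (LinearMap.annihilator_le_of_injective _ (Submodule.subtype_injective _))))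
    (hP.ofModule_mem_of_quotient hI
      (hM.trans (LinearMap.annihilator_le_of_injective _ (Submodule.subtype_injective _))))

lemma mem_of_self (hP : IsLocalizing P) (h : ofModule S S ∈ P) (M : DifferentialModule.{u} S) :
    M ∈ P :=
  hP.mem_of_quotient (I := ⊥) (hP.mem_of_equiv (M := ofModule S S)
    (Submodule.quotEquivOfEqBot ⊥ rfl).symm (fun _ => by simp) h) bot_le

end Quotient

lemma cone_mem_of_surjective (hP : IsLocalizing P) {f : M →ₗ[S] N} (hf : IsChainMap f)
    (hsurj : Function.Surjective f) (hker : M.restrict _ hf.map_mem_ker ∈ P) : cone f hf ∈ P := by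
  have h : IsShortExact (M := (M.restrict _ hf.map_mem_ker).neg) (N := cone f hf)
      (Q := cone .id (isChainMap_id (M := N)))
      (.inl S M N ∘ₗ (LinearMap.ker f).subtype) (f.prodMap .id) :=
    ⟨fun x => Prod.ext rfl (by simp), fun x => Prod.ext (by simp [hf x.1]) rfl,
      LinearMap.inl_injective.comp Subtype.val_injective,
      fun x => ⟨fun hx => ⟨⟨x.1, congrArg Prod.fst hx⟩, Prod.ext rfl (congrArg Prod.snd hx).symm⟩,
        by rintro ⟨y, rfl⟩; simp⟩,
      hsurj.prodMap Function.surjective_id⟩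
  exact hP.middle_mem h (hP.neg_mem_iff.2 hker) (hP.acyclic_mem acyclic_cone_id)

lemma cone_mem_of_ker_of_coker (hP : IsLocalizing P) {f : M →ₗ[S] N} (hf : IsChainMap f)
    (hker : M.restrict _ hf.map_mem_ker ∈ P) (hcoker : N.quotient _ hf.map_mem_range ∈ P) :
    cone f hf ∈ P := by
  have hf' : IsChainMap (N := N.restrict _ hf.map_mem_range) f.rangeRestrict :=
    fun x => Subtype.ext (hf x)
  have hcone : cone _ hf' ∈ P := hP.cone_mem_of_surjective hf' f.surjective_rangeRestrict
    (by convert hker using 2; exact LinearMap.ker_rangeRestrict f)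
  have h : IsShortExact (M := cone _ hf') (N := cone f hf) (Q := N.quotient _ hf.map_mem_range)
      (LinearMap.id.prodMap (LinearMap.range f).subtype)
      ((LinearMap.range f).mkQ ∘ₗ .snd S M N) :=
    ⟨fun x => rfl, fun x => by simp,
      Function.injective_id.prodMap Subtype.val_injective,
      fun x => ⟨fun hx => ⟨(x.1, ⟨x.2, (Submodule.Quotient.mk_eq_zero _).1 hx⟩), rfl⟩,
        by rintro ⟨y, rfl⟩; simp⟩,
      (Submodule.mkQ_surjective _).comp LinearMap.snd_surjective⟩
  exact hP.middle_mem h hcone hcoker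

/-- `M` is a retract of an extension of the cone of `b` by `X`, up to the sign of its
differential. -/
lemma mem_of_smul_eq_comp_add_homotopy (hP : IsLocalizing P) {b : S} {v : M →ₗ[S] X}
    {w : X →ₗ[S] M} {h : M →ₗ[S] M} (hv : IsChainMap v) (hw : IsChainMap w)
    (hb : ∀ m, b • m = w (v m) + (M.d (h m) + h (M.d m))) (hX : X ∈ P)
    (hker : M.restrict _ (isChainMap_smul_id b).map_mem_ker ∈ P)
    (hcoker : M.quotient _ (isChainMap_smul_id b).map_mem_range ∈ P) : M ∈ P := by
  have hcone := hP.cone_mem_of_ker_of_coker (isChainMap_smul_id b) hker hcoker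
  have hbw : IsChainMap (M := M.prod X) (b • .fst S M X + w ∘ₗ .snd S M X) :=
    fun x => by simp [hw x.2]
  have hE : IsShortExact (M := cone _ (isChainMap_smul_id b)) (N := cone _ hbw) (Q := X.neg)
      ((LinearMap.inl S M X).prodMap .id) (.snd S M X ∘ₗ .fst S (M × X) M) :=
    ⟨fun x => by simp, fun x => rfl, LinearMap.inl_injective.prodMap Function.injective_id,
      fun x => ⟨fun hx => ⟨(x.1.1, x.2), Prod.ext (Prod.ext rfl (Eq.symm hx)) rfl⟩,
        by rintro ⟨y, rfl⟩; rfl⟩,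
      fun x => ⟨((0, x), 0), rfl⟩⟩
  refine hP.neg_mem_iff.1 (hP.mem_of_retract (M := M.neg) (N := cone _ hbw)
    (s := (LinearMap.id.prod (-v)).prod (-h)) (r := .fst S M X ∘ₗ .fst S (M × X) M)
    (fun m => ?_) (fun _ => rfl) (fun _ => rfl)
    (hP.middle_mem hE hcone (hP.neg_mem_iff.2 hX)))
  refine Prod.ext (Prod.ext rfl ?_) ?_
  · simp [hv m]
  · simp [hb m]

lemma mem_of_isNullHomotopic (hP : IsLocalizing P) {b : S} (hb : IsNullHomotopic b M)
    (hker : M.restrict _ (isChainMap_smul_id b).map_mem_ker ∈ P)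
    (hcoker : M.quotient _ (isChainMap_smul_id b).map_mem_range ∈ P) : M ∈ P := by
  obtain ⟨h, hh⟩ := hb
  exact hP.mem_of_smul_eq_comp_add_homotopy (X := ofModule S PUnit) (v := 0) (w := 0)
    (fun _ => rfl) (fun _ => by simp) (fun m => by simpa using hh m) hP.mem_of_subsingleton
    hker hcoker

lemma mem_of_forall_isNullHomotopic (hP : IsLocalizing P) {B : Finset S}
    (hB : ∀ N : DifferentialModule.{u} S, (∀ b ∈ B, ∀ x : N, b • x = 0) → N ∈ P)
    (hM : ∀ b ∈ B, IsNullHomotopic b M) : M ∈ P := by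
  suffices h : ∀ (s : Finset S) (M : DifferentialModule.{u} S), (∀ b ∈ s, IsNullHomotopic b M) →
      (∀ b ∈ B, b ∈ s ∨ ∀ x : M, b • x = 0) → M ∈ P from h B M hM fun b hb => .inl hb
  classical
  intro s
  induction s using Finset.induction_on with
  | empty => exact fun M _ h => hB M (by simpa using h)
  | insert a s _ ih =>
    intro M hM h
    rw [Finset.forall_mem_insert] at hM
    have hmem (N : DifferentialModule.{u} S) (hs : ∀ b ∈ s, IsNullHomotopic b N)
        (ha : ∀ x : N, a • x = 0) (hN : ∀ b : S, (∀ x : M, b • x = 0) → ∀ x : N, b • x = 0) :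
        N ∈ P :=
      ih N hs fun b hb => (h b hb).elim
        (fun hb => (Finset.mem_insert.1 hb).elim (fun hba => .inr (hba ▸ ha)) .inl)
        fun hb => .inr (hN b hb)
    exact hP.mem_of_isNullHomotopic hM.1
      (hmem _ (fun b hb => (hM.2 b hb).restrict a) (fun x => Subtype.ext x.2)
        fun b hb x => Subtype.ext (hb x))
      (hmem _ (fun b hb => (hM.2 b hb).quotient a)
        (fun x => Submodule.Quotient.induction_on _ x fun x =>
          (Submodule.Quotient.mk_eq_zero _).2 (LinearMap.mem_range_self _ x))
        fun b hb x => Submodule.Quotient.induction_on _ x fun x =>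
          congrArg (Submodule.mkQ _) (hb x))

end IsLocalizing

end DifferentialModule

section DirectSumPi

variable (S : Type*) [CommRing S] (ι : Type*) {κ : Type*} (M : κ → Type*)
  [∀ i, AddCommGroup (M i)] [∀ i, Module S (M i)]

/-- The canonical map comparing powers with direct sums. -/
noncomputable def directSumPi : (⨁ i, (ι → M i)) →ₗ[S] (ι → ⨁ i, M i) :=
  .pi fun a => lmap fun _ => .proj a

lemma directSumPi_bijective [Finite ι] : Function.Bijective (directSumPi S ι M) := by
  classical
  have := Fintype.ofFinite ι
  refine ⟨fun x y hxy => ?_, fun x => ⟨∑ a, lmap (fun i => .single S (fun _ => M i) a) (x a), ?_⟩⟩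
  · ext i a
    simpa [directSumPi] using congrArg (· i) (congrFun hxy a)
  · ext a i
    simp [directSumPi, Pi.single_apply]

end DirectSumPi

/-- A finite complex of finite free `A`-modules, encoded by the matrix of its total differential in
a homogeneous basis `ι`; `deg` records the degrees of the basis elements. -/
structure GradedDifferential (ι : Type) [Fintype ι] (A : Type u) [CommRing A] where
  matrix : Matrix ι ι A
  deg : ι → ℤ
  matrix_mul_matrix : matrix * matrix = 0
  deg_eq : ∀ a b, matrix a b ≠ 0 → deg a = deg b + 1

namespace GradedDifferential

open DifferentialModule

variable {ι : Type} [Fintype ι] {S : Type u} [CommRing S] (D : GradedDifferential ι S)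
  {M N Q : DifferentialModule.{u} S}

/-- The total differential module of the complex encoded by `D`. -/
abbrev toDifferentialModule : DifferentialModule S where
  carrier := ι → S
  d := D.matrix.mulVecLin
  d_d x := by simp [D.matrix_mul_matrix]

section Module

variable {L : Type u} [AddCommGroup L] [Module S L]

lemma sum_matrix_smul_sum_matrix_smul (x : ι → L) (a : ι) :
    ∑ b, D.matrix a b • ∑ c, D.matrix b c • x c = 0 := by
  simp_rw [Finset.smul_sum, smul_smul]
  rw [Finset.sum_comm]
  simp_rw [← Finset.sum_smul, ← Matrix.mul_apply, D.matrix_mul_matrix]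
  simp

lemma matrix_smul_negOnePow_smul (a b : ι) (x : L) :
    D.matrix a b • (D.deg b).negOnePow • x = -((D.deg a).negOnePow • D.matrix a b • x) := by
  by_cases h : D.matrix a b = 0
  · simp [h]
  · rw [D.deg_eq a b h, Int.negOnePow_succ, Units.neg_smul, neg_neg, smul_comm]

end Module

/-- The tensor product of the complex encoded by `D` with `M`, with carrier `ι → M`. -/
abbrev twist (M : DifferentialModule.{u} S) : DifferentialModule S where
  carrier := ι → M
  d := .pi fun a => ∑ b, D.matrix a b • .proj b + (D.deg a).negOnePow • M.d ∘ₗ .proj a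
  d_d x := by
    ext a
    simp [smul_add, Finset.sum_add_distrib, D.sum_matrix_smul_sum_matrix_smul,
      D.matrix_smul_negOnePow_smul, ← Finset.smul_sum]

lemma twist_d_apply (x : ι → M) (a : ι) :
    (D.twist M).d x a = ∑ b, D.matrix a b • x b + (D.deg a).negOnePow • M.d (x a) := by
  simp

lemma isChainMap_compLeft {f : M →ₗ[S] N} (hf : IsChainMap f) :
    IsChainMap (M := D.twist M) (N := D.twist N) (f.compLeft ι) := fun x => by
  ext a
  simp [hf (x a)]

lemma isShortExact_twist {f : M →ₗ[S] N} {g : N →ₗ[S] Q} (h : IsShortExact f g) :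
    IsShortExact (M := D.twist M) (N := D.twist N) (Q := D.twist Q)
      (f.compLeft ι) (g.compLeft ι) where
  chainMap_left := D.isChainMap_compLeft h.chainMap_left
  chainMap_right := D.isChainMap_compLeft h.chainMap_right
  injective := h.injective.comp_left
  exact x := by
    refine ⟨fun hx => ?_, ?_⟩
    · choose y hy using fun a => (h.exact (x a)).1 (congrFun hx a)
      exact ⟨y, funext hy⟩
    · rintro ⟨y, rfl⟩
      exact funext fun a => h.exact.apply_apply_eq_zero (y a)
  surjective := h.surjective.comp_left

lemma exists_sub_eq_zero_of_deg_le (hM : M.Acyclic) {n : ℤ} {x : ι → M}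
    (hx : (D.twist M).d x = 0) (hn : ∀ a, D.deg a < n → x a = 0) :
    ∃ y, ∀ a, D.deg a ≤ n → (x - (D.twist M).d y) a = 0 := by
  have hsum {z : ι → M} (hz : ∀ a, D.deg a < n → z a = 0) {a : ι} (ha : D.deg a ≤ n) :
      ∑ b, D.matrix a b • z b = 0 := by
    refine Finset.sum_eq_zero fun b _ => ?_
    by_cases hab : D.matrix a b = 0
    · simp [hab]
    · rw [hz b (by have := D.deg_eq a b hab; omega), smul_zero]
  have hcycle (a : ι) (ha : D.deg a ≤ n) : M.d (x a) = 0 := by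
    have h := congrFun hx a
    rw [twist_d_apply, hsum hn ha, zero_add, Pi.zero_apply, smul_eq_zero_iff_eq] at h
    exact h
  choose! y hy using fun a ha => hM (x a) (hcycle a ha)
  classical
  refine ⟨fun a => if D.deg a = n then (D.deg a).negOnePow • y a else 0, fun a ha => ?_⟩
  rw [Pi.sub_apply, twist_d_apply, hsum (fun a ha => if_neg ha.ne) ha, zero_add]
  obtain ha' | ha' := ha.lt_or_eq
  · simp [ha'.ne, hn a ha']
  · simp [ha', hy a ha, smul_smul]

lemma acyclic_twist (hM : M.Acyclic) : (D.twist M).Acyclic := by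
  suffices h : ∀ (k : ℕ) (n : ℤ), (∀ a, D.deg a < n + k) → ∀ x, (D.twist M).d x = 0 →
      (∀ a, D.deg a < n → x a = 0) → ∃ y, (D.twist M).d y = x by
    obtain ⟨m, hm⟩ := (Set.finite_range D.deg).bddBelow
    obtain ⟨m', hm'⟩ := (Set.finite_range D.deg).bddAbove
    have hm (a) : m ≤ D.deg a := hm (Set.mem_range_self a)
    have hm' (a) : D.deg a ≤ m' := hm' (Set.mem_range_self a)
    exact fun x hx => h (m' + 1 - m).toNat m (fun a => by grind) x hx fun a ha => by grind
  intro k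
  induction k with
  | zero => exact fun n hn x _ h => ⟨0, (map_zero _).trans (funext fun a => (h a (by grind)).symm)⟩
  | succ k ih =>
    intro n hn x hx h
    obtain ⟨y, hy⟩ := D.exists_sub_eq_zero_of_deg_le hM hx h
    obtain ⟨z, hz⟩ := ih (n + 1) (by grind) (x - (D.twist M).d y)
      (by rw [map_sub, hx, d_d, sub_zero]) fun a ha => hy a (by omega)
    exact ⟨z + y, by rw [map_add, hz, sub_add_cancel]⟩

lemma isLocalizing_twist {P : Set (DifferentialModule.{u} S)} (hP : IsLocalizing P) :
    IsLocalizing {M | D.twist M ∈ P} where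
  acyclic_mem hM := hP.acyclic_mem (D.acyclic_twist hM)
  left_mem h := hP.left_mem (D.isShortExact_twist h)
  middle_mem h := hP.middle_mem (D.isShortExact_twist h)
  right_mem h := hP.right_mem (D.isShortExact_twist h)
  directSum_mem M hM :=
    hP.mem_of_equiv (M := directSum fun i => D.twist (M i)) (N := D.twist (directSum M))
      (.ofBijective (directSumPi S ι fun i => M i) (directSumPi_bijective S ι _))
      (fun x => by ext a i; simp [directSumPi, DirectSum.smul_apply, Units.smul_def])
      (hP.directSum_mem _ hM)

lemma twist_mem {P : Set (DifferentialModule.{u} S)} (hP : IsLocalizing P)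
    (hD : D.toDifferentialModule ∈ P) (M : DifferentialModule.{u} S) : D.twist M ∈ P := by
  refine (D.isLocalizing_twist hP).mem_of_self ?_ M
  exact hP.mem_of_equiv (M := D.toDifferentialModule) (N := D.twist (ofModule S S)) (.refl S _)
    (fun x => by ext a; simp [Matrix.mulVec, dotProduct]) hD

end GradedDifferential

section ContractingHomotopy

variable {K V : Type*} [Field K] [AddCommGroup V] [Module K V]

lemma exists_contracting_homotopy {d : V →ₗ[K] V} (hd : LinearMap.ker d = LinearMap.range d) :
    ∃ h : V →ₗ[K] V, d ∘ₗ h + h ∘ₗ d = .id := by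
  obtain ⟨s, hs⟩ := d.rangeRestrict.exists_rightInverse_of_surjective d.range_rangeRestrict
  have hds (y : LinearMap.range d) : d (s y) = y := congrArg Subtype.val (LinearMap.congr_fun hs y)
  have hmem (x : V) : x - s (d.rangeRestrict x) ∈ LinearMap.range d :=
    hd.le (by simp [hds])
  refine ⟨s ∘ₗ (LinearMap.id - s ∘ₗ d.rangeRestrict).codRestrict _ hmem, LinearMap.ext fun x => ?_⟩
  have hdx : d (d x) = 0 := by rw [← LinearMap.mem_ker, hd]; exact LinearMap.mem_range_self d x
  have h : (LinearMap.id - s ∘ₗ d.rangeRestrict).codRestrict _ hmem (d x) = d.rangeRestrict x :=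
    Subtype.ext (by simp [show d.rangeRestrict (d x) = 0 from Subtype.ext hdx])
  simp [hds, h]

lemma exists_contracting_homotopy_or_exists_functional {d : V →ₗ[K] V} (hd : ∀ x, d (d x) = 0) :
    (∃ h : V →ₗ[K] V, d ∘ₗ h + h ∘ₗ d = .id) ∨
      ∃ (v : V) (f : V →ₗ[K] K), d v = 0 ∧ f ∘ₗ d = 0 ∧ f v ≠ 0 := by
  by_cases h : LinearMap.ker d ≤ LinearMap.range d
  · exact .inl (exists_contracting_homotopy
      (h.antisymm fun _ ⟨x, hx⟩ => hx ▸ LinearMap.mem_ker.2 (hd x)))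
  · obtain ⟨v, hv, hv'⟩ := SetLike.not_le_iff_exists.1 h
    obtain ⟨f, hfv, hf⟩ := Submodule.exists_le_ker_of_notMem hv'
    exact .inr ⟨v, f, hv, LinearMap.range_le_ker_iff.1 hf, hfv⟩

open Matrix

lemma exists_matrix_contracting_homotopy_or_exists_dotProduct_ne_zero {ι : Type*} [Fintype ι]
    [DecidableEq ι] {D : Matrix ι ι K} (hD : D * D = 0) :
    (∃ h : Matrix ι ι K, D * h + h * D = 1) ∨
      ∃ v w : ι → K, D *ᵥ v = 0 ∧ w ᵥ* D = 0 ∧ w ⬝ᵥ v ≠ 0 := by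
  refine (exists_contracting_homotopy_or_exists_functional (d := D.mulVecLin)
    fun x => by simp [hD]).imp ?_ ?_
  · rintro ⟨h, hh⟩
    refine ⟨LinearMap.toMatrix' h, Matrix.toLin'.injective ?_⟩
    simpa [Matrix.toLin'_mul, ← Matrix.toLin'_apply'] using hh
  · rintro ⟨v, f, hv, hf, hfv⟩
    obtain ⟨w, rfl⟩ := (dotProductEquiv K ι).surjective f
    refine ⟨v, w, hv, dotProduct_eq_zero _ fun x => ?_, hfv⟩
    rw [← dotProduct_mulVec]
    exact LinearMap.congr_fun hf x

end ContractingHomotopy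

lemma exists_notMem_forall_algebraMap_mul_eq {A : Type*} [CommRing A] (p : Ideal A) [p.IsPrime]
    {κ : Type*} [Finite κ] (f : κ → p.ResidueField) :
    ∃ s ∉ p, ∃ g : κ → A, ∀ i, algebraMap A p.ResidueField (g i) =
      algebraMap A p.ResidueField s * f i := by
  obtain ⟨⟨s, hs⟩, h⟩ := IsLocalization.exist_integer_multiples_of_finite
    (nonZeroDivisors (A ⧸ p)) f
  choose g hg using h
  obtain ⟨s, rfl⟩ := Ideal.Quotient.mk_surjective s
  choose g' hg' using fun i => Ideal.Quotient.mk_surjective (g i)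
  refine ⟨s, fun h => nonZeroDivisors.ne_zero hs (Ideal.Quotient.eq_zero_iff_mem.2 h), g',
    fun i => ?_⟩
  have := hg i
  rw [← hg' i] at this
  simpa [Algebra.smul_def] using this

namespace GradedDifferential

open DifferentialModule Matrix

variable {ι : Type} [Fintype ι] [DecidableEq ι] {A : Type u} [CommRing A]
  (D : GradedDifferential ι A)

/-- The ideal of those scalars whose action on the complex encoded by `D` is null-homotopic. -/
def nullhomotopyIdeal : Ideal A where
  carrier := {a | ∃ h : Matrix ι ι A, a • (1 : Matrix ι ι A) = D.matrix * h + h * D.matrix}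
  zero_mem' := ⟨0, by simp⟩
  add_mem' := by
    rintro a b ⟨h, hh⟩ ⟨k, hk⟩
    exact ⟨h + k, by rw [add_smul, hh, hk]; noncomm_ring⟩
  smul_mem' := by
    rintro c a ⟨h, hh⟩
    exact ⟨c • h, by rw [smul_assoc, hh, smul_add, Matrix.mul_smul, Matrix.smul_mul]⟩

/-- By Cayley-Hamilton the determinant of the null-homotopic endomorphism `c` is, up to sign,
`q * c` for a polynomial `q` in `c`, and `q` commutes with the differential. -/
lemma det_mem_nullhomotopyIdeal (h : Matrix ι ι A) :
    (D.matrix * h + h * D.matrix).det ∈ D.nullhomotopyIdeal := by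
  set c := D.matrix * h + h * D.matrix with hc
  set q := Polynomial.aeval c c.charpoly.divX with hq
  have hDc : Commute D.matrix c := by
    rw [commute_iff_eq, hc, mul_add, add_mul, ← mul_assoc, mul_assoc h, D.matrix_mul_matrix,
      zero_mul, mul_zero, zero_add, add_zero, mul_assoc]
  have hDq : D.matrix * q = q * D.matrix := Algebra.commute_of_mem_adjoin_singleton_of_commute
    (Polynomial.aeval_mem_adjoin_singleton A c) hDc
  have hqc : c.charpoly.coeff 0 • 1 = -(q * c) := by
    have h := c.aeval_self_charpoly
    rw [← Polynomial.divX_mul_X_add c.charpoly, map_add, map_mul, Polynomial.aeval_X,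
      Polynomial.aeval_C, ← hq, Algebra.algebraMap_eq_smul_one] at h
    exact eq_neg_of_add_eq_zero_right h
  rw [det_eq_sign_charpoly_coeff]
  refine Ideal.mul_mem_left _ _ ⟨-(q * h), ?_⟩
  rw [hqc, hc, mul_add, mul_neg, neg_mul, neg_add, ← mul_assoc, ← mul_assoc, ← hDq, mul_assoc,
    mul_assoc]

lemma not_nullhomotopyIdeal_le_or_exists_dotProduct_notMem (p : Ideal A) [p.IsPrime] :
    ¬ D.nullhomotopyIdeal ≤ p ∨
      ∃ v w : ι → A,
        (∀ a, (D.matrix *ᵥ v) a ∈ p) ∧ (∀ a, (w ᵥ* D.matrix) a ∈ p) ∧ w ⬝ᵥ v ∉ p := by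
  let φ := algebraMap A p.ResidueField
  have mem_iff (a : A) : a ∈ p ↔ φ a = 0 := Ideal.algebraMap_residueField_eq_zero.symm
  have hD : D.matrix.map φ * D.matrix.map φ = 0 := by
    rw [← Matrix.map_mul, D.matrix_mul_matrix, Matrix.map_zero _ φ.map_zero]
  refine (exists_matrix_contracting_homotopy_or_exists_dotProduct_ne_zero hD).imp ?_ ?_
  · rintro ⟨h, hh⟩ hle
    obtain ⟨s, hs, g, hg⟩ := exists_notMem_forall_algebraMap_mul_eq p fun i : ι × ι => h i.1 i.2
    have hg' : (Matrix.of fun a b => g (a, b)).map φ = φ s • h := by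
      ext a b
      exact hg (a, b)
    have := hle (D.det_mem_nullhomotopyIdeal (.of fun a b => g (a, b)))
    rw [mem_iff, RingHom.map_det, RingHom.mapMatrix_apply, Matrix.map_add _ φ.map_add,
      Matrix.map_mul, Matrix.map_mul, hg', Matrix.mul_smul, Matrix.smul_mul, ← smul_add, hh,
      det_smul, det_one, mul_one] at this
    exact hs ((mem_iff s).2 (eq_zero_of_pow_eq_zero this))
  · rintro ⟨v, w, hv, hw, hwv⟩
    obtain ⟨s, hs, v', hv'⟩ := exists_notMem_forall_algebraMap_mul_eq p v
    obtain ⟨t, ht, w', hw'⟩ := exists_notMem_forall_algebraMap_mul_eq p w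
    have hv' : φ ∘ v' = φ s • v := funext hv'
    have hw' : φ ∘ w' = φ t • w := funext hw'
    refine ⟨v', w', fun a => ?_, fun a => ?_, ?_⟩
    · rw [mem_iff, RingHom.map_mulVec, hv', mulVec_smul, hv, smul_zero, Pi.zero_apply]
    · rw [mem_iff, RingHom.map_vecMul, hw', smul_vecMul, hw, smul_zero, Pi.zero_apply]
    · rw [mem_iff, RingHom.map_dotProduct, hv', hw', smul_dotProduct, dotProduct_smul]
      exact mul_ne_zero (mt (mem_iff t).2 ht) (mul_ne_zero (mt (mem_iff s).2 hs) hwv)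

end GradedDifferential

namespace GradedDifferential

open DifferentialModule Matrix

variable {ι : Type} [Fintype ι] {A S : Type u} [CommRing A] [CommRing S]

/-- Base change of the complex encoded by `D` along `φ`. -/
abbrev map (φ : A →+* S) (D : GradedDifferential ι A) : GradedDifferential ι S where
  matrix := D.matrix.map φ
  deg := D.deg
  matrix_mul_matrix := by rw [← Matrix.map_mul, D.matrix_mul_matrix, Matrix.map_zero _ φ.map_zero]
  deg_eq a b h := D.deg_eq a b fun h0 => h (by rw [Matrix.map_apply, h0, φ.map_zero])

variable {P : Set (DifferentialModule.{u} S)}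

section Nullhomotopy

variable [DecidableEq ι]

lemma map_nullhomotopyIdeal_le (φ : A →+* S) (D : GradedDifferential ι A) :
    D.nullhomotopyIdeal.map φ ≤ (D.map φ).nullhomotopyIdeal := by
  refine Ideal.map_le_iff_le_comap.2 ?_
  rintro a ⟨h, hh⟩
  refine ⟨h.map φ, ?_⟩
  rw [← Matrix.map_mul, ← Matrix.map_mul, ← Matrix.map_add _ φ.map_add, ← hh]
  ext i j
  simp [Matrix.one_apply, apply_ite φ]

lemma isNullHomotopic_toDifferentialModule {D : GradedDifferential ι S} {b : S}
    (hb : b ∈ D.nullhomotopyIdeal) : IsNullHomotopic b D.toDifferentialModule := by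
  obtain ⟨h, hh⟩ := hb
  refine ⟨h.mulVecLin, fun x => ?_⟩
  simpa [add_mulVec, smul_mulVec] using congrArg (· *ᵥ x) hh

lemma toDifferentialModule_mem_of_quotient {D : GradedDifferential ι S} (hP : IsLocalizing P)
    {I : Ideal S} (hI : I.FG) (hID : I ≤ D.nullhomotopyIdeal) (h : ofModule S (S ⧸ I) ∈ P) :
    D.toDifferentialModule ∈ P := by
  obtain ⟨B, rfl⟩ := hI
  exact hP.mem_of_forall_isNullHomotopic
    (fun N hN => hP.mem_of_quotient h (Submodule.span_le.2 fun b hb =>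
      Module.mem_annihilator.2 (hN b hb)))
    fun b hb => isNullHomotopic_toDifferentialModule (hID (Submodule.subset_span hb))

end Nullhomotopy

/-- The class `P` contains every module with zero differential that is killed by `φ(I)`; as a
condition on `I`, this is the Oka family to which the prime ideal principle is applied. -/
def ContainsKilledBy (φ : A →+* S) (P : Set (DifferentialModule.{u} S)) (I : Ideal A) : Prop :=
  ∀ M : DifferentialModule.{u} S, M.d = 0 → (∀ a ∈ I, ∀ x : M, φ a • x = 0) → M ∈ P

variable {φ : A →+* S}

lemma ContainsKilledBy.sup_span {I : Ideal A} {a : A}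
    (h : ContainsKilledBy φ P (I ⊔ Ideal.span {a})) {M : DifferentialModule.{u} S} (hd : M.d = 0)
    (hI : ∀ b ∈ I, ∀ x : M, φ b • x = 0) (ha : ∀ x : M, φ a • x = 0) : M ∈ P := by
  have hle : I ⊔ Ideal.span {a} ≤ (Module.annihilator S M).comap φ :=
    sup_le (fun b hb => Module.mem_annihilator.2 (hI b hb))
      ((Ideal.span_singleton_le_iff_mem _).2 (Module.mem_annihilator.2 ha))
  exact h M hd fun b hb => Module.mem_annihilator.1 (hle hb)

lemma ContainsKilledBy.restrict_ker_mem {I : Ideal A} {a : A}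
    (h : ContainsKilledBy φ P (I ⊔ Ideal.span {a})) {M : DifferentialModule.{u} S} (hd : M.d = 0)
    (hI : ∀ b ∈ I, ∀ x : M, φ b • x = 0) :
    M.restrict _ (isChainMap_smul_id (φ a)).map_mem_ker ∈ P :=
  h.sup_span (LinearMap.ext fun x => Subtype.ext (LinearMap.congr_fun hd x.1))
    (fun b hb x => Subtype.ext (hI b hb x)) fun x => Subtype.ext x.2

lemma ContainsKilledBy.quotient_range_mem {I : Ideal A} {a : A}
    (h : ContainsKilledBy φ P (I ⊔ Ideal.span {a})) {M : DifferentialModule.{u} S} (hd : M.d = 0)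
    (hI : ∀ b ∈ I, ∀ x : M, φ b • x = 0) :
    M.quotient _ (isChainMap_smul_id (φ a)).map_mem_range ∈ P :=
  h.sup_span (Submodule.linearMap_qext _ (LinearMap.ext fun x =>
      congrArg (Submodule.mkQ _) (LinearMap.congr_fun hd x)))
    (fun b hb x => Submodule.Quotient.induction_on _ x fun x =>
      congrArg (Submodule.mkQ _) (hI b hb x))
    fun x => Submodule.Quotient.induction_on _ x fun x =>
      (Submodule.Quotient.mk_eq_zero _).2 (LinearMap.mem_range_self _ x)

lemma isOka_containsKilledBy (hP : IsLocalizing P) : Ideal.IsOka (ContainsKilledBy φ P) where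
  top M _ hM := by
    have : Subsingleton M :=
      subsingleton_of_forall_eq 0 fun x => by simpa using hM 1 Submodule.mem_top x
    exact hP.mem_of_subsingleton
  oka {I a} hsup hcolon M hd hM := by
    refine hP.mem_of_restrict_of_quotient (isChainMap_smul_id (φ a)).map_mem_range
      (hcolon _ (LinearMap.ext fun x => Subtype.ext (LinearMap.congr_fun hd x.1)) ?_)
      (hsup.quotient_range_mem hd hM)
    rintro b hb ⟨_, x, rfl⟩
    refine Subtype.ext ?_
    simpa [mul_smul] using hM _ (Ideal.mem_colon_span_singleton.1 hb) x

/-- If `v` and `w` are a cycle and a cocycle modulo `p`, multiplication by `w ⬝ᵥ v` on a module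
killed by `p` factors through its twist. -/
lemma containsKilledBy_of_dotProduct (hP : IsLocalizing P) {D : GradedDifferential ι A}
    (hD : (D.map φ).toDifferentialModule ∈ P) {p : Ideal A} {v w : ι → A}
    (hv : ∀ a, (D.matrix *ᵥ v) a ∈ p) (hw : ∀ a, (w ᵥ* D.matrix) a ∈ p)
    (h : ContainsKilledBy φ P (p ⊔ Ideal.span {w ⬝ᵥ v})) : ContainsKilledBy φ P p := by
  intro M hd hM
  refine hP.mem_of_smul_eq_comp_add_homotopy (X := (D.map φ).twist M) (b := φ (w ⬝ᵥ v))
    (v := .pi fun a => φ (v a) • .id) (w := ∑ a, φ (w a) • .proj a) (h := 0)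
    (fun m => ?_) (fun x => ?_) (fun m => ?_) ((D.map φ).twist_mem hP hD M)
    (h.restrict_ker_mem hd hM) (h.quotient_range_mem hd hM)
  · ext a
    have := hM _ (hv a) m
    simp only [mulVec, dotProduct, map_sum, map_mul, Finset.sum_smul, mul_smul] at this
    simp [hd, this]
  · have (b : ι) := hM _ (hw b) (x b)
    simp only [vecMul, dotProduct, map_sum, map_mul, Finset.sum_smul, mul_smul] at this
    have hdx (a : ι) : ((D.map φ).twist M).d x a = ∑ b, φ (D.matrix a b) • x b := by
      rw [twist_d_apply, hd, LinearMap.zero_apply, smul_zero, add_zero]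
      rfl
    simp only [LinearMap.sum_apply, LinearMap.smul_apply, LinearMap.proj_apply, hdx,
      Finset.smul_sum]
    rw [hd, LinearMap.zero_apply, Finset.sum_comm]
    exact Finset.sum_eq_zero fun b _ => this b
  · simp [dotProduct, Finset.sum_smul, mul_smul]

lemma containsKilledBy_nullhomotopyIdeal [DecidableEq ι] [IsNoetherianRing A] (hP : IsLocalizing P)
    {D : GradedDifferential ι A} (hD : (D.map φ).toDifferentialModule ∈ P) :
    ContainsKilledBy φ P D.nullhomotopyIdeal := by
  by_contra hJ
  obtain ⟨p, hJp, hp⟩ := exists_maximal_ge_of_wellFoundedGT (¬ ContainsKilledBy φ P ·) _ hJ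
  have := (isOka_containsKilledBy hP).isPrime_of_maximal_not hp
  obtain h | ⟨v, w, hv, hw, hvw⟩ := D.not_nullhomotopyIdeal_le_or_exists_dotProduct_notMem p
  · exact h hJp
  · exact hp.prop (containsKilledBy_of_dotProduct hP hD hv hw
      (of_not_not (hp.not_prop_of_gt (Submodule.lt_sup_iff_notMem.2 hvw))))

theorem map_toDifferentialModule_mem_iff [DecidableEq ι] [IsNoetherianRing A]
    (D : GradedDifferential ι A) (hP : IsLocalizing P) :
    (D.map φ).toDifferentialModule ∈ P ↔
      ofModule S (S ⧸ D.nullhomotopyIdeal.map φ) ∈ P := by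
  refine ⟨fun h => containsKilledBy_nullhomotopyIdeal hP h _ rfl fun a ha x => ?_, fun h =>
    toDifferentialModule_mem_of_quotient hP (Ideal.FG.map (IsNoetherian.noetherian _) φ)
      (D.map_nullhomotopyIdeal_le φ) h⟩
  exact Module.mem_annihilator.1
    (Ideal.annihilator_quotient.ge (Ideal.mem_map_of_mem φ ha)) x

end GradedDifferential

section HomologyPreservesColimits

variable {J : Type*} [Category J] {A : Type*} [Category A] [Abelian A] [HasColimitsOfShape J A]

/-- The natural transformation with components `colimit.ι F j`. -/
@[simps]
noncomputable def evaluationToColim (j : J) : (evaluation J A).obj j ⟶ colim where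
  app F := colimit.ι F j

/-- The colimit of a functor to short complexes, computed degreewise. -/
@[simps]
noncomputable def shortComplexColimitCocone (S : ShortComplex (J ⥤ A)) :
    Cocone ((ShortComplex.functorEquivalence J A).functor.obj S) where
  pt := S.map colim
  ι.app j := S.mapNatTrans (evaluationToColim j)
  ι.naturality i j f := by
    ext
    · exact (colimit.w S.X₁ f).trans (Category.comp_id _).symm
    · exact (colimit.w S.X₂ f).trans (Category.comp_id _).symm
    · exact (colimit.w S.X₃ f).trans (Category.comp_id _).symm

variable [HasExactColimitsOfShape J A]

lemma shortComplexHomology_preservesColimitsOfShape :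
    PreservesColimitsOfShape J (ShortComplex.homologyFunctor A) where
  preservesColimit {F} := by
    have : PreservesFiniteLimits (colim (J := J) (C := A)) :=
      HasExactColimitsOfShape.preservesFiniteLimits
    let E := ShortComplex.functorEquivalence J A
    let S := E.inverse.obj F
    have naturality {G H : (J ⥤ A) ⥤ A} [PreservesFiniteLimits G] [PreservesFiniteColimits G]
        [PreservesFiniteLimits H] [PreservesFiniteColimits H] [G.PreservesZeroMorphisms]
        [H.PreservesZeroMorphisms] (τ : G ⟶ H) :
        τ.app S.homology ≫ (S.mapHomologyIso H).inv =
          (S.mapHomologyIso G).inv ≫ ShortComplex.homologyMap (S.mapNatTrans τ) := by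
      simp [NatTrans.app_homology]
    let e : S.homology ≅ E.functor.obj S ⋙ ShortComplex.homologyFunctor A :=
      NatIso.ofComponents (fun j => (S.mapHomologyIso ((evaluation J A).obj j)).symm)
        (fun f => naturality ((evaluation J A).map f))
    have : PreservesColimit ((E.inverse ⋙ E.functor).obj F) (ShortComplex.homologyFunctor A) :=
      preservesColimit_of_preserves_colimit_cocone (t := shortComplexColimitCocone S)
        (ShortComplex.isColimitOfIsColimitπ _ (colimit.isColimit S.X₁) (colimit.isColimit S.X₂)
          (colimit.isColimit S.X₃))
        (IsColimit.equivOfNatIsoOfIso e _ _ (Cocone.ext (S.mapHomologyIso colim).symm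
          (fun j => by
            change ((S.mapHomologyIso ((evaluation J A).obj j)).hom ≫
              (evaluationToColim j).app S.homology) ≫ (S.mapHomologyIso colim).inv = _
            rw [Category.assoc, naturality, Iso.hom_inv_id_assoc]
            rfl)) (colimit.isColimit S.homology))
    exact preservesColimit_of_iso_diagram _ (E.counitIso.app F)

instance homologyFunctor_preservesColimitsOfShape {ι : Type*} (c : ComplexShape ι) (i : ι) :
    PreservesColimitsOfShape J (HomologicalComplex.homologyFunctor A c i) := by
  have := shortComplexHomology_preservesColimitsOfShape (J := J) (A := A)
  have : PreservesColimitsOfShape J (HomologicalComplex.shortComplexFunctor A c i) :=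
    ⟨fun {_} => ⟨fun {_} hs => ⟨ShortComplex.isColimitOfIsColimitπ _
      (isColimitOfPreserves (HomologicalComplex.eval A c _) hs)
      (isColimitOfPreserves (HomologicalComplex.eval A c _) hs)
      (isColimitOfPreserves (HomologicalComplex.eval A c _) hs)⟩⟩⟩
  exact preservesColimitsOfShape_of_natIso (F := HomologicalComplex.shortComplexFunctor A c i ⋙
    ShortComplex.homologyFunctor A) (Iso.refl _)

instance quasiIso_isStableUnderColimitsOfShape {ι : Type*} (c : ComplexShape ι) :
    (HomologicalComplex.quasiIso A c).IsStableUnderColimitsOfShape J where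
  condition X₁ X₂ c₁ c₂ h₁ h₂ f hf φ hφ := by
    rw [HomologicalComplex.mem_quasiIso_iff, quasiIso_iff]
    intro i
    rw [quasiIsoAt_iff_isIso_homologyMap]
    let H := HomologicalComplex.homologyFunctor A c i
    refine MorphismProperty.IsStableUnderColimitsOfShape.condition
      (W := MorphismProperty.isomorphisms A) _ _ _ _ (isColimitOfPreserves H h₁)
      (isColimitOfPreserves H h₂) (Functor.whiskerRight f H) (fun j => ?_) (H.map φ) (fun j => ?_)
    · exact (quasiIsoAt_iff_isIso_homologyMap (f.app j) i).1 ((quasiIso_iff _).1 (hf j) i)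
    · exact (H.map_comp _ _).symm.trans ((congrArg H.map (hφ j)).trans (H.map_comp _ _))

end HomologyPreservesColimits

section DerivedCategoryCoproducts

open DerivedCategory

variable {J : Type*} {A : Type*} [Category A] [Abelian A] [HasCoproductsOfShape J A]
  [HasExactColimitsOfShape (Discrete J) A] [HasDerivedCategory A]
  {X : J → CochainComplex A ℤ} {c : Cofan X}

lemma exists_Q_map_inj_comp_eq (hc : IsColimit c) {Z : DerivedCategory A}
    (g : ∀ j, Q.obj (X j) ⟶ Z) :
    ∃ h : Q.obj c.pt ⟶ Z, ∀ j, Q.map (c.inj j) ≫ h = g j := by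
  let e := Q.objObjPreimageIso Z
  choose X' s hs f hf using fun j => right_fac (g j ≫ e.inv)
  have hσ : HomologicalComplex.quasiIso A (.up ℤ) (Limits.Sigma.map s) :=
    MorphismProperty.colimMap _ fun ⟨j⟩ => (isIso_Q_map_iff_quasiIso A (s j)).1 (hs j)
  have := (isIso_Q_map_iff_quasiIso A _).2 hσ
  let φ := (coproductIsCoproduct X).coconePointUniqueUpToIso hc
  have hφ (j : J) : c.inj j ≫ φ.inv = Limits.Sigma.ι X j :=
    (coproductIsCoproduct X).comp_coconePointUniqueUpToIso_inv hc ⟨j⟩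
  refine ⟨Q.map φ.inv ≫ inv (Q.map (Limits.Sigma.map s)) ≫ Q.map (Sigma.desc f) ≫ e.hom,
    fun j => ?_⟩
  have hι : Q.map (Limits.Sigma.ι X j) =
      inv (Q.map (s j)) ≫ Q.map (Limits.Sigma.ι X' j) ≫ Q.map (Limits.Sigma.map s) := by
    simp [← Functor.map_comp]
  rw [← Functor.map_comp_assoc, hφ, hι]
  simp only [Category.assoc, IsIso.hom_inv_id_assoc]
  rw [← Functor.map_comp_assoc, Sigma.ι_desc, ← Category.assoc, ← hf]
  simp

/-- The inclusions lift to a fibre `F` of `h`, hence so does an endomorphism of the coproduct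
which is the identity on homology. -/
lemma eq_zero_of_Q_map_inj_comp_eq_zero (hc : IsColimit c) {Z : DerivedCategory A}
    (h : Q.obj c.pt ⟶ Z) (hh : ∀ j, Q.map (c.inj j) ≫ h = 0) : h = 0 := by
  obtain ⟨F, a, b, hT⟩ := distinguished_cocone_triangle₁ h
  choose m hm using fun j => Triangle.coyoneda_exact₂ _ hT (Q.map (c.inj j)) (hh j)
  obtain ⟨l, hl⟩ : ∃ l : Q.obj c.pt ⟶ F, ∀ j, Q.map (c.inj j) ≫ l = m j :=
    exists_Q_map_inj_comp_eq hc m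
  have hla (j : J) : Q.map (c.inj j) ≫ l ≫ a = Q.map (c.inj j) :=
    ((Category.assoc _ _ _).symm.trans (hl j =≫ a)).trans (hm j).symm
  have : IsIso (l ≫ a) := by
    rw [DerivedCategory.isIso_iff]
    intro n
    suffices (homologyFunctor A n).map (l ≫ a) = 𝟙 _ by rw [this]; infer_instance
    have : PreservesColimitsOfShape (Discrete J) (Q ⋙ homologyFunctor A n) :=
      preservesColimitsOfShape_of_natIso (homologyFunctorFactors A n).symm
    refine (isColimitOfPreserves (Q ⋙ homologyFunctor A n) hc).hom_ext fun ⟨j⟩ => ?_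
    exact ((homologyFunctor A n).map_comp _ _).symm.trans
      ((congrArg _ (hla j)).trans (Category.comp_id _).symm)
  have hah : a ≫ h = 0 := comp_distTriang_mor_zero₁₂ _ hT
  rw [← cancel_epi (l ≫ a), comp_zero, Category.assoc, hah, comp_zero]

instance Q_preservesCoproductsOfShape :
    PreservesColimitsOfShape (Discrete J) (Q (C := A)) :=
  have (X : J → CochainComplex A ℤ) : PreservesColimit (Discrete.functor X) (Q (C := A)) :=
    ⟨fun {c : Cofan X} hc => ⟨(Cofan.isColimitMapCoconeEquiv _ _ _).symm
      (Cofan.IsColimit.mk _ (fun d => (exists_Q_map_inj_comp_eq hc d.inj).choose)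
        (fun d => (exists_Q_map_inj_comp_eq hc d.inj).choose_spec)
        (fun d m hm => sub_eq_zero.1 (eq_zero_of_Q_map_inj_comp_eq_zero hc _ (fun j => by
          rw [Preadditive.comp_sub, (exists_Q_map_inj_comp_eq hc d.inj).choose_spec j]
          exact sub_eq_zero.2 (hm j)))))⟩⟩
  preservesColimitsOfShape_of_discrete _

instance hasCoproductsOfShape_derivedCategory : HasCoproductsOfShape J (DerivedCategory A) where
  has_colimit F := by
    let X := fun j => Q.objPreimage (F.obj ⟨j⟩)
    exact hasColimit_of_iso (F := Discrete.functor X ⋙ Q)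
      (Discrete.natIso fun j => (Q.objObjPreimageIso (F.obj j)).symm)

end DerivedCategoryCoproducts

section Localizing

variable {T : Type u} [Category.{v} T] [Preadditive T] [HasZeroObject T]
  [HasShift T ℤ] [∀ n : ℤ, (shiftFunctor T n).Additive] [Pretriangulated T]

lemma isLocalizingSub_Loc (S : Set T) : IsLocalizingSub.{w} (Loc.{w} S) where
  zero_mem _ hL := hL.1.zero_mem
  mem_of_iso e hx L hL := hL.1.mem_of_iso e (hx L hL)
  shift_mem n _ hx L hL := hL.1.shift_mem n (hx L hL)
  cone_mem Δ hΔ h₁ h₂ L hL := hL.1.cone_mem Δ hΔ (h₁ L hL) (h₂ L hL)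
  coprod_mem f c hc hf L hL := hL.1.coprod_mem f c hc (fun i => hf i L hL)

lemma subset_Loc (S : Set T) : S ⊆ Loc.{w} S := fun _ hx _ hL => hL.2 hx

lemma Loc_subset {S L : Set T} (hL : IsLocalizingSub.{w} L) (hS : S ⊆ L) : Loc.{w} S ⊆ L :=
  fun _ hx => hx L ⟨hL, hS⟩

namespace IsLocalizingSub

variable {L : Set T} (hL : IsLocalizingSub.{w} L)
include hL

lemma mem_of_isZero {x : T} (hx : IsZero x) : x ∈ L :=
  hL.mem_of_iso hx.isoZero.symm hL.zero_mem

lemma mem_of_shift_mem (n : ℤ) {x : T} (hx : x⟦n⟧ ∈ L) : x ∈ L :=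
  hL.mem_of_iso ((shiftEquiv T n).unitIso.app x).symm (hL.shift_mem (-n) hx)

lemma obj₁_mem (Δ : Triangle T) (hΔ : Δ ∈ distinguishedTriangles)
    (h₂ : Δ.obj₂ ∈ L) (h₃ : Δ.obj₃ ∈ L) : Δ.obj₁ ∈ L :=
  hL.mem_of_shift_mem 1 (hL.cone_mem _ (rot_of_distTriang _ hΔ) h₂ h₃)

lemma obj₂_mem (Δ : Triangle T) (hΔ : Δ ∈ distinguishedTriangles)
    (h₁ : Δ.obj₁ ∈ L) (h₃ : Δ.obj₃ ∈ L) : Δ.obj₂ ∈ L :=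
  hL.obj₁_mem _ (rot_of_distTriang _ hΔ) h₃ (hL.shift_mem 1 h₁)

end IsLocalizingSub

/-- The Eilenberg swindle: `x ⊞ y^∞ ≅ y^∞` for a retract `x` of `y`. If `y = x ⊞ x'`, this is the
rebracketing of `x ⊞ (x' ⊞ x) ⊞ (x' ⊞ x) ⊞ ⋯`; it is written in terms of the idempotent `r ≫ s`
since `x'` need not exist. -/
noncomputable def retractSwindle [HasCoproducts.{w} T] {x y : T} (s : x ⟶ y) (r : y ⟶ x)
    (hsr : s ≫ r = 𝟙 x) :
    (x ⊞ ∐ fun _ : ULift.{w} ℕ => y) ≅ ∐ fun _ : ULift.{w} ℕ => y :=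
  let z (n : ℕ) : y ⟶ ∐ fun _ : ULift.{w} ℕ => y := Sigma.ι (fun _ : ULift.{w} ℕ => y) ⟨n⟩
  { hom := biprod.desc (s ≫ z 0)
      (Sigma.desc fun n => r ≫ s ≫ z (n.down + 1) + (𝟙 y - r ≫ s) ≫ z n.down)
    inv := Sigma.desc fun n => Nat.casesOn n.down (r ≫ biprod.inl)
      (fun k => r ≫ s ≫ z k ≫ biprod.inr) + (𝟙 y - r ≫ s) ≫ z n.down ≫ biprod.inr
    hom_inv_id := by
      refine biprod.hom_ext' _ _ ?_ (Limits.Sigma.hom_ext _ _ ?_)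
      · simp [z, Preadditive.comp_add, Preadditive.sub_comp, Preadditive.comp_sub, reassoc_of% hsr]
      · rintro ⟨_ | n⟩ <;>
          simp [z, Preadditive.comp_add, Preadditive.add_comp, Preadditive.sub_comp,
            Preadditive.comp_sub, reassoc_of% hsr]
    inv_hom_id := by
      ext ⟨_ | n⟩ <;>
        simp [z, Preadditive.comp_add, Preadditive.sub_comp, Preadditive.comp_sub,
          reassoc_of% hsr] }

lemma IsLocalizingSub.mem_of_retract [HasCoproducts.{w} T] {L : Set T}
    (hL : IsLocalizingSub.{w} L) {x y : T} (s : x ⟶ y) (r : y ⟶ x) (hsr : s ≫ r = 𝟙 x)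
    (hy : y ∈ L) : x ∈ L :=
  have hy' : (∐ fun _ : ULift.{w} ℕ => y) ∈ L :=
    hL.coprod_mem _ _ (coproductIsCoproduct _) (fun _ => hy)
  hL.obj₁_mem _ (binaryBiproductTriangle_distinguished x _)
    (hL.mem_of_iso (retractSwindle s r hsr).symm hy') hy'

end Localizing

section DegreewiseCoproducts

variable {R : Type u} [CommRing R] {κ : Type u} [DecidableEq κ]

/-- A cofan of complexes of modules which is a direct sum in each degree is a coproduct. -/
noncomputable def isColimitOfDegreewiseDirectSum {X : κ → CochainComplex (ModuleCat.{u} R) ℤ}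
    (c : Cofan X) (e : ∀ i, (⨁ k, (X k).X i) ≃ₗ[R] c.pt.X i)
    (he : ∀ i k x, e i (lof R κ (fun k => (X k).X i) k x) = (c.inj k).f i x) : IsColimit c :=
  HomologicalComplex.isColimitOfEval _ _ fun i =>
    let h := ModuleCat.coproductCoconeIsColimit (fun k => (X k).X i)
    (Cofan.isColimitMapCoconeEquiv _ _ _).symm
      (h.ofIsoColimit (Cofan.ext (e i).toModuleIso fun k =>
        ModuleCat.hom_ext (LinearMap.ext (he i k))))

end DegreewiseCoproducts

namespace DifferentialModule

variable {R : Type u} [CommRing R]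

/-- The periodic complex `⋯ → M → M → M → ⋯` of a differential module `M`. -/
noncomputable def periodic (M : DifferentialModule.{u} R) :
    CochainComplex (ModuleCat.{u} R) ℤ where
  X _ := ModuleCat.of R M
  d i j := if i + 1 = j then ModuleCat.ofHom M.d else 0
  shape _ _ h := if_neg h
  d_comp_d' i j k (hij : i + 1 = j) (hjk : j + 1 = k) := by
    rw [if_pos hij, if_pos hjk]
    ext x
    exact M.d_d x

lemma periodic_d (M : DifferentialModule.{u} R) {i j : ℤ} (h : i + 1 = j) :
    M.periodic.d i j = ModuleCat.ofHom M.d :=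
  if_pos h

variable {M N Q : DifferentialModule.{u} R}

/-- The map of periodic complexes induced by a chain map. -/
@[simps]
noncomputable def periodicMap (f : M →ₗ[R] N) (hf : IsChainMap f) :
    M.periodic ⟶ N.periodic where
  f _ := ModuleCat.ofHom f
  comm' i j h := by
    rw [periodic_d _ h, periodic_d _ h]
    ext x
    exact (hf x).symm

lemma Acyclic.acyclic_periodic (hM : M.Acyclic) : M.periodic.Acyclic := fun i => by
  rw [M.periodic.exactAt_iff' (i - 1) i (i + 1) (by simp) (by simp),
    ShortComplex.moduleCat_exact_iff]
  intro x hx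
  change M.periodic.d _ _ x = 0 at hx
  change ∃ y, M.periodic.d _ _ y = x
  rw [periodic_d _ rfl] at hx
  rw [periodic_d _ (by lia)]
  exact hM x hx

lemma IsShortExact.exists_periodic_shortExact {f : M →ₗ[R] N} {g : N →ₗ[R] Q}
    (h : IsShortExact f g) : ∃ w, (ShortComplex.mk (periodicMap f h.chainMap_left)
      (periodicMap g h.chainMap_right) w).ShortExact := by
  refine ⟨?_, HomologicalComplex.shortExact_of_degreewise_shortExact _ fun i =>
    ModuleCat.shortComplex_shortExact _ h.exact h.injective h.surjective⟩
  ext i x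
  exact h.exact.apply_apply_eq_zero x

/-- The inclusions into a direct sum, on periodic complexes. -/
noncomputable def periodicCofan {κ : Type u} (M : κ → DifferentialModule.{u} R) :
    Cofan fun k => (M k).periodic :=
  open Classical in
  Cofan.mk (directSum M).periodic fun k =>
    periodicMap (N := directSum M) (lof R κ (fun k => M k) k) fun x => by simp

/-- The periodic complex of a direct sum is the coproduct of the periodic complexes. -/
noncomputable def periodicCofanIsColimit {κ : Type u} (M : κ → DifferentialModule.{u} R) :
    IsColimit (periodicCofan M) := by
  classical
  exact isColimitOfDegreewiseDirectSum _ (fun _ => .refl R _) fun _ _ _ => rfl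

end DifferentialModule

section PeriodicClass

open DerivedCategory DifferentialModule

lemma isZero_Q_obj_of_acyclic {A : Type*} [Category A] [Abelian A] [HasDerivedCategory A]
    {K : CochainComplex A ℤ} (hK : K.Acyclic) : IsZero (Q.obj K) := by
  have : IsIso (Q.map (0 : K ⟶ K)) := by
    rw [isIso_Q_map_iff_quasiIso, quasiIso_iff]
    intro i
    rw [quasiIsoAt_iff_exactAt _ _ (hK i)]
    exact hK i
  rw [Q.map_zero] at this
  exact (isIsoZeroEquivIsoZero _ _ this).1.isZero_iff.2 (isZero_zero _)

variable {R : Type u} [CommRing R] [HasDerivedCategory.{w'} (ModuleCat.{u} R)]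
  {L : Set (DerivedCategory (ModuleCat.{u} R))}

lemma IsLocalizingSub.Q_obj_mem_of_isColimit (hL : IsLocalizingSub.{u} L) {κ : Type u}
    {X : κ → CochainComplex (ModuleCat.{u} R) ℤ} {c : Cofan X} (hc : IsColimit c)
    (hX : ∀ k, Q.obj (X k) ∈ L) : Q.obj c.pt ∈ L :=
  hL.coprod_mem _ (Cofan.mk _ fun k => Q.map (c.inj k))
    (Cofan.isColimitMapCoconeEquiv _ _ _ (isColimitOfPreserves Q hc)) hX

/-- The differential modules whose periodic complex lies in `L`. -/
def periodicClass (L : Set (DerivedCategory (ModuleCat.{u} R))) : Set (DifferentialModule.{u} R) :=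
  {M | Q.obj M.periodic ∈ L}

lemma IsLocalizingSub.isLocalizing_periodicClass (hL : IsLocalizingSub.{u} L) :
    IsLocalizing (periodicClass L) where
  acyclic_mem hM := hL.mem_of_isZero (isZero_Q_obj_of_acyclic hM.acyclic_periodic)
  left_mem h h₂ h₃ := hL.obj₁_mem _
    (triangleOfSES_distinguished h.exists_periodic_shortExact.choose_spec) h₂ h₃
  middle_mem h h₁ h₃ := hL.obj₂_mem _
    (triangleOfSES_distinguished h.exists_periodic_shortExact.choose_spec) h₁ h₃
  right_mem h h₁ h₂ := hL.cone_mem _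
    (triangleOfSES_distinguished h.exists_periodic_shortExact.choose_spec) h₁ h₂
  directSum_mem M hM := hL.Q_obj_mem_of_isColimit (periodicCofanIsColimit M) hM

end PeriodicClass

section Fold

open DerivedCategory DifferentialModule

variable {R : Type u} [CommRing R] (X : CochainComplex (ModuleCat.{u} R) ℤ)

/-- The differential `x ↦ X.d x` on the direct sum of the terms of a complex. -/
noncomputable def foldD : (⨁ n, X.X n) →ₗ[R] ⨁ n, X.X n :=
  toModule R ℤ _ fun n => lof R ℤ (fun n => X.X n) (n + 1) ∘ₗ (X.d n (n + 1)).hom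

lemma foldD_lof {i j : ℤ} (h : i + 1 = j) (x : X.X i) :
    foldD X (lof R ℤ (fun n => X.X n) i x) = lof R ℤ (fun n => X.X n) j (X.d i j x) := by
  subst h
  simp [foldD]

lemma foldD_apply {i j : ℤ} (h : i + 1 = j) (x : ⨁ n, X.X n) : foldD X x j = X.d i j (x i) := by
  induction x using DirectSum.induction_on with
  | zero => simp
  | of k x =>
    rw [← lof_eq_of R, foldD_lof X rfl, lof_eq_of, lof_eq_of]
    by_cases hk : k = i
    · subst hk h
      rw [of_eq_same, of_eq_same]
    · rw [of_eq_of_ne _ _ _ (Ne.symm hk), of_eq_of_ne _ _ _ (by lia), map_zero]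
  | add x y hx hy => simp [hx, hy]

/-- The direct sum of the terms of a complex, with its total differential. -/
noncomputable abbrev fold : DifferentialModule R where
  carrier := ⨁ n, X.X n
  d := foldD X
  d_d x := by
    ext n
    rw [foldD_apply X (sub_add_cancel n 1), foldD_apply X (sub_add_cancel (n - 1) 1)]
    exact ConcreteCategory.congr_hom (X.d_comp_d (n - 1 - 1) (n - 1) n) (x (n - 1 - 1))

/-- The inclusion of a complex into the periodic complex of its fold. -/
noncomputable def toPeriodicFold : X ⟶ (fold X).periodic where
  f i := ModuleCat.ofHom (lof R ℤ (fun n => X.X n) i)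
  comm' i j h := by
    rw [periodic_d _ h]
    ext x
    exact foldD_lof X h x

/-- The projection of the periodic complex of the fold onto the complex. -/
noncomputable def ofPeriodicFold : (fold X).periodic ⟶ X where
  f i := ModuleCat.ofHom (component R ℤ (fun n => X.X n) i)
  comm' i j h := by
    rw [periodic_d _ h]
    ext1
    exact LinearMap.ext fun x => (foldD_apply X h x).symm

lemma toPeriodicFold_comp_ofPeriodicFold : toPeriodicFold X ≫ ofPeriodicFold X = 𝟙 X := by
  ext i x
  exact component.lof_self R (M := fun n => X.X n) i x

/-- The inclusion of `X⟦n⟧` into the periodic complex of the fold. Its signs compensate for the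
sign `(-1) ^ n` of the differential of `X⟦n⟧`. -/
noncomputable def shiftToPeriodicFold (n : ℤ) : X⟦n⟧ ⟶ (fold X).periodic where
  f i := ModuleCat.ofHom ((n * i).negOnePow • lof R ℤ (fun n => X.X n) (i + n))
  comm' i j h := by
    obtain rfl : i + 1 = j := h
    rw [periodic_d _ rfl]
    ext (x : X.X (i + n))
    change foldD X ((n * i).negOnePow • lof R ℤ (fun n => X.X n) (i + n) x) =
      (n * (i + 1)).negOnePow • lof R ℤ (fun n => X.X n) (i + 1 + n)
        (n.negOnePow • X.d (i + n) (i + 1 + n) x)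
    simp only [Units.smul_def, map_zsmul, foldD_lof X (show i + n + 1 = i + 1 + n by lia),
      smul_smul, mul_add, mul_one, Int.negOnePow_add, ← Units.val_mul, mul_assoc,
      Int.units_mul_self]

/-- In each degree, the periodic complex of the fold is the direct sum of the shifts. -/
noncomputable def shiftSumEquiv (i : ℤ) :
    (⨁ n : ULift.{u} ℤ, X.X (i + n.down)) ≃ₗ[R] ⨁ n, X.X n :=
  let e (n : ULift.{u} ℤ) : X.X (i + n.down) ≃ₗ[R] X.X (i + n.down) :=
    .smulOfUnit (Units.map (Int.castRingHom R).toMonoidHom (n.down * i).negOnePow)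
  let e' : (⨁ n, X.X n) ≃ₗ[R] ⨁ n : ULift.{u} ℤ, X.X (i + n.down) :=
    lequivCongrLeft R ((Equiv.addLeft i).symm.trans Equiv.ulift.{u}.symm)
  congrLinearEquiv e ≪≫ₗ e'.symm

lemma shiftSumEquiv_lof (i : ℤ) (n : ULift.{u} ℤ) (x : X.X (i + n.down)) :
    shiftSumEquiv X i (lof R _ (fun n : ULift.{u} ℤ => X.X (i + n.down)) n x) =
      (n.down * i).negOnePow • lof R ℤ (fun n => X.X n) (i + n.down) x := by
  simp only [shiftSumEquiv, LinearEquiv.trans_apply, coe_congrLinearEquiv, lmap_lof]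
  refine (lequivCongrLeft_symm_lof (R := R) (M := fun n => X.X n)).trans ?_
  change lof R ℤ (fun n => X.X n) (i + n.down) ((((n.down * i).negOnePow : ℤ) : R) • x) = _
  rw [Int.cast_smul_eq_zsmul, map_zsmul, Units.smul_def]

/-- The periodic complex of the fold of `X` is the coproduct of all shifts of `X`. -/
noncomputable def isColimitShiftToPeriodicFold :
    IsColimit (Cofan.mk (fold X).periodic fun n : ULift.{u} ℤ => shiftToPeriodicFold X n.down) :=
  isColimitOfDegreewiseDirectSum _ (shiftSumEquiv X) (shiftSumEquiv_lof X)

/-- A module is the fold of the complex it defines in degree zero. -/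
noncomputable def foldSingleEquiv (M : ModuleCat.{u} R) :
    fold ((HomologicalComplex.single _ (.up ℤ) 0).obj M) ≃ₗ[R] M :=
  let Y := (HomologicalComplex.single (ModuleCat R) (.up ℤ) 0).obj M
  let e : Y.X 0 ≅ M := HomologicalComplex.singleObjXSelf (.up ℤ) 0 M
  { e.hom.hom ∘ₗ component R ℤ (fun n => Y.X n) 0 with
    invFun := lof R ℤ (fun n => Y.X n) 0 ∘ₗ e.inv.hom
    left_inv x := by
      ext n
      by_cases hn : n = 0
      · subst hn
        change component R ℤ (fun n => Y.X n) 0 (lof R ℤ (fun n => Y.X n) 0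
          (e.inv (e.hom (x 0)))) = x 0
        rw [component.lof_self, Iso.hom_inv_id_apply]
      · have := ModuleCat.subsingleton_of_isZero
          (HomologicalComplex.isZero_single_obj_X (.up ℤ) 0 M n hn)
        exact Subsingleton.elim _ _
    right_inv x := by
      change e.hom (component R ℤ (fun n => Y.X n) 0 (lof R ℤ (fun n => Y.X n) 0 (e.inv x))) = x
      rw [component.lof_self, Iso.inv_hom_id_apply] }

lemma foldD_single (M : ModuleCat.{u} R) :
    foldD ((HomologicalComplex.single _ (.up ℤ) 0).obj M) = 0 := by
  ext n x m
  simp [foldD]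

variable [HasDerivedCategory.{w'} (ModuleCat.{u} R)]
  {L : Set (DerivedCategory (ModuleCat.{u} R))}

lemma IsLocalizingSub.fold_mem_periodicClass_iff (hL : IsLocalizingSub.{u} L) :
    fold X ∈ periodicClass L ↔ Q.obj X ∈ L := by
  refine ⟨fun h => ?_, fun h => ?_⟩
  · refine hL.mem_of_retract (Q.map (toPeriodicFold X)) (Q.map (ofPeriodicFold X)) ?_ h
    rw [← Q.map_comp, toPeriodicFold_comp_ofPeriodicFold, Q.map_id]
  · exact hL.Q_obj_mem_of_isColimit (isColimitShiftToPeriodicFold X) fun n =>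
      hL.mem_of_iso ((Q.commShiftIso n.down).app X).symm (hL.shift_mem _ h)

lemma IsLocalizingSub.ofModule_mem_periodicClass_iff (hL : IsLocalizingSub.{u} L)
    (M : ModuleCat.{u} R) :
    ofModule R M ∈ periodicClass L ↔ smod R M ∈ L := by
  have hP := hL.isLocalizing_periodicClass
  have he : IsChainMap (N := ofModule R M) (foldSingleEquiv M).toLinearMap := fun x => by
    simp only [fold, foldD_single, LinearMap.zero_apply, map_zero]
  calc ofModule R M ∈ periodicClass L
    _ ↔ fold ((HomologicalComplex.single _ (.up ℤ) 0).obj M) ∈ periodicClass L :=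
      (hP.mem_iff_of_equiv (foldSingleEquiv M) he).symm
    _ ↔ Q.obj ((HomologicalComplex.single _ (.up ℤ) 0).obj M) ∈ L :=
      hL.fold_mem_periodicClass_iff _
    _ ↔ smod R M ∈ L :=
      let e := (singleFunctorIsoCompQ (ModuleCat.{u} R) 0).app M
      ⟨hL.mem_of_iso e.symm, hL.mem_of_iso e⟩

end Fold

section SmallObjects

variable {T : Type u} [Category.{v} T] [Preadditive T]

section Truncation

variable {T' : Type*} [Category* T'] [Preadditive T'] {ι : Type w} {f f' : ι → T} {c : Cofan f}
  {c' : Cofan f'} (hc : IsColimit c) (hc' : IsColimit c')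

open Classical in
/-- The idempotent of a coproduct whose image is the part indexed by `F`. -/
noncomputable def cofanTruncation (F : Finset ι) : c.pt ⟶ c.pt :=
  Cofan.IsColimit.desc hc fun k => if k ∈ F then c.inj k else 0

lemma inj_cofanTruncation_of_mem {F : Finset ι} {k : ι} (hk : k ∈ F) :
    c.inj k ≫ cofanTruncation hc F = c.inj k := by
  rw [cofanTruncation, Cofan.IsColimit.fac, if_pos hk]

lemma inj_cofanTruncation_of_notMem {F : Finset ι} {k : ι} (hk : k ∉ F) :
    c.inj k ≫ cofanTruncation hc F = 0 := by
  rw [cofanTruncation, Cofan.IsColimit.fac, if_neg hk]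

lemma cofanTruncation_naturality (g : ∀ k, f k ⟶ f' k) (θ : c.pt ⟶ c'.pt)
    (hθ : ∀ k, c.inj k ≫ θ = g k ≫ c'.inj k) (F : Finset ι) :
    cofanTruncation hc F ≫ θ = θ ≫ cofanTruncation hc' F := by
  refine Cofan.IsColimit.hom_ext hc _ _ fun k => ?_
  rw [reassoc_of% hθ k]
  by_cases hk : k ∈ F
  · rw [← Category.assoc, inj_cofanTruncation_of_mem hc hk, inj_cofanTruncation_of_mem hc' hk, hθ]
  · rw [← Category.assoc, inj_cofanTruncation_of_notMem hc hk,
      inj_cofanTruncation_of_notMem hc' hk, zero_comp, comp_zero]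

lemma map_cofanTruncation (G : T ⥤ T') [G.PreservesZeroMorphisms]
    (hGc : IsColimit (Cofan.mk (G.obj c.pt) fun k => G.map (c.inj k))) (F : Finset ι) :
    G.map (cofanTruncation hc F) = cofanTruncation hGc F := by
  refine Cofan.IsColimit.hom_ext hGc _ _ fun k => ?_
  change G.map (c.inj k) ≫ G.map (cofanTruncation hc F) = _
  rw [← G.map_comp]
  by_cases hk : k ∈ F
  · rw [inj_cofanTruncation_of_mem hc hk, inj_cofanTruncation_of_mem hGc hk]
    rfl
  · rw [inj_cofanTruncation_of_notMem hc hk, inj_cofanTruncation_of_notMem hGc hk, G.map_zero]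

lemma cofanTruncation_comp_of_subset {F G : Finset ι} (h : F ⊆ G) :
    cofanTruncation hc F ≫ cofanTruncation hc G = cofanTruncation hc F := by
  refine Cofan.IsColimit.hom_ext hc _ _ fun k => ?_
  by_cases hk : k ∈ F
  · rw [← Category.assoc, inj_cofanTruncation_of_mem hc hk, inj_cofanTruncation_of_mem hc (h hk)]
  · rw [← Category.assoc, inj_cofanTruncation_of_notMem hc hk, zero_comp]

lemma cofanTruncation_empty : cofanTruncation hc ∅ = 0 :=
  Cofan.IsColimit.hom_ext hc _ _ fun k => by
    rw [inj_cofanTruncation_of_notMem hc (Finset.notMem_empty k), comp_zero]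

lemma cofanTruncation_insert [DecidableEq ι] {F : Finset ι} {k : ι} (hk : k ∉ F) :
    ∃ π : c.pt ⟶ f k,
      cofanTruncation hc (insert k F) = cofanTruncation hc F + π ≫ c.inj k := by
  refine ⟨Cofan.IsColimit.desc hc (Pi.single k (𝟙 (f k))),
    Cofan.IsColimit.hom_ext hc _ _ fun l => ?_⟩
  rw [Preadditive.comp_add, ← Category.assoc (c.inj l), Cofan.IsColimit.fac]
  obtain rfl | hl := eq_or_ne l k
  · simp [inj_cofanTruncation_of_mem hc, inj_cofanTruncation_of_notMem hc hk]
  · rw [Pi.single_eq_of_ne hl, zero_comp, add_zero]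
    by_cases hlF : l ∈ F
    · simp [inj_cofanTruncation_of_mem hc, hlF]
    · simp [inj_cofanTruncation_of_notMem hc, hl, hlF]

end Truncation

/-- Every map from `C` to a coproduct factors through a finite part of it. Unlike compactness, this
is evidently stable under extensions. -/
def IsSmallObj (C : T) : Prop :=
  ∀ ⦃ι : Type w⦄ (f : ι → T) (c : Cofan f) (hc : IsColimit c) (x : C ⟶ c.pt),
    ∃ F, x ≫ cofanTruncation hc F = x

lemma IsCompactObj.isSmallObj {C : T} (h : IsCompactObj.{w} C) : IsSmallObj.{w} C := by
  intro ι f c hc x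
  classical
  obtain ⟨p, rfl⟩ := (h f c hc).2 x
  refine ⟨p.support, ?_⟩
  simp only [cofanHomComparison, DFinsupp.sumAddHom_apply, DFinsupp.sum, Preadditive.sum_comp]
  refine Finset.sum_congr rfl fun i hi => ?_
  change (p i ≫ c.inj i) ≫ _ = p i ≫ c.inj i
  rw [Category.assoc, inj_cofanTruncation_of_mem hc (by convert hi)]

namespace IsSmallObj

lemma of_iso {C C' : T} (hC : IsSmallObj.{w} C) (e : C ≅ C') : IsSmallObj.{w} C' := by
  intro ι f c hc x
  obtain ⟨F, hF⟩ := hC f c hc (e.hom ≫ x)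
  exact ⟨F, by rwa [Category.assoc, cancel_epi] at hF⟩

variable [HasShift T ℤ] [∀ n : ℤ, (shiftFunctor T n).Additive]

lemma shift {C : T} (hC : IsSmallObj.{w} C) (n : ℤ) : IsSmallObj.{w} (C⟦n⟧) := by
  intro ι f c hc x
  let S := shiftFunctor T (-n)
  have hc' : IsColimit (Cofan.mk (S.obj c.pt) fun i => S.map (c.inj i)) :=
    Cofan.isColimitMapCoconeEquiv _ _ _ (isColimitOfPreserves S hc)
  obtain ⟨F, hF⟩ := hC _ _ hc' ((shiftShiftNeg C n).inv ≫ S.map x)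
  refine ⟨F, S.map_injective ?_⟩
  rwa [← map_cofanTruncation hc S, Category.assoc, cancel_epi, ← S.map_comp] at hF

lemma obj₁ [HasZeroObject T] [Pretriangulated T] (Δ : Triangle T) (hΔ : Δ ∈ distTriang T)
    (h₂ : IsSmallObj.{w} Δ.obj₂) (h₃ : IsSmallObj.{w} Δ.obj₃) : IsSmallObj.{w} Δ.obj₁ := by
  intro ι f c hc x
  classical
  let δ : Δ.obj₃⟦(-1 : ℤ)⟧ ⟶ Δ.obj₁ := Δ.invRotate.mor₁
  obtain ⟨F, hF⟩ := h₃.shift (-1) f c hc (δ ≫ x)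
  have hF' : δ ≫ (x - x ≫ cofanTruncation hc F) = 0 := by
    rw [Preadditive.comp_sub, ← Category.assoc, hF, sub_self]
  obtain ⟨y, hy⟩ : ∃ y : Δ.obj₂ ⟶ c.pt, x - x ≫ cofanTruncation hc F = Δ.mor₁ ≫ y :=
    Triangle.yoneda_exact₂ _ (inv_rot_of_distTriang _ hΔ) _ hF'
  obtain ⟨G, hG⟩ := h₂ f c hc y
  have hGF : y ≫ cofanTruncation hc (F ∪ G) = y := by
    rw [← hG, Category.assoc, cofanTruncation_comp_of_subset hc Finset.subset_union_right]
  refine ⟨F ∪ G, ?_⟩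
  rw [eq_add_of_sub_eq hy, Preadditive.add_comp, Category.assoc, Category.assoc, hGF,
    cofanTruncation_comp_of_subset hc Finset.subset_union_left]

end IsSmallObj

end SmallObjects

section FactorsThrough

variable {T : Type u} [Category.{v} T]

/-- The map `f` factors through an object of `W`. -/
def FactorsThrough (W : Set T) {C Y : T} (f : C ⟶ Y) : Prop :=
  ∃ K ∈ W, ∃ (a : C ⟶ K) (b : K ⟶ Y), a ≫ b = f

namespace FactorsThrough

variable {W : Set T}

lemma comp {C Y Z : T} {f : C ⟶ Y} (hf : FactorsThrough W f) (g : Y ⟶ Z) :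
    FactorsThrough W (f ≫ g) := by
  obtain ⟨K, hK, a, b, rfl⟩ := hf
  exact ⟨K, hK, a, b ≫ g, (Category.assoc _ _ _).symm⟩

variable [Preadditive T] [HasZeroObject T] [HasShift T ℤ]
  [∀ n : ℤ, (shiftFunctor T n).Additive] [Pretriangulated T]
  (hW : ∀ Δ ∈ distTriang T, Δ.obj₁ ∈ W → Δ.obj₃ ∈ W → Δ.obj₂ ∈ W)
include hW

lemma add {C Y : T} {f g : C ⟶ Y} (hf : FactorsThrough W f) (hg : FactorsThrough W g) :
    FactorsThrough W (f + g) := by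
  obtain ⟨K, hK, a, b, rfl⟩ := hf
  obtain ⟨K', hK', a', b', rfl⟩ := hg
  exact ⟨K ⊞ K', hW _ (binaryBiproductTriangle_distinguished K K') hK hK',
    biprod.lift a a', biprod.desc b b', by simp⟩

/-- If `ψ` factors through `K'`, pushing out the triangle of `a` along `F ⟶ K'` gives an extension
`E` of `K` by `K'`, and `f` is the sum of a map through `E` and a map through `K`. -/
lemma of_fiber {F C K X Y Z : T} {i : F ⟶ C} {a : C ⟶ K} {δ : K ⟶ F⟦(1 : ℤ)⟧}
    (hF : Triangle.mk i a δ ∈ distTriang T) {x : X ⟶ Y} {y : Y ⟶ Z} {z : Z ⟶ X⟦(1 : ℤ)⟧}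
    (hX : Triangle.mk x y z ∈ distTriang T) {ψ : F ⟶ Y} {f : C ⟶ Z} {b : K ⟶ X⟦(1 : ℤ)⟧}
    (hψf : i ≫ f = ψ ≫ y) (hψb : δ ≫ ψ⟦(1 : ℤ)⟧' = b ≫ (-x⟦(1 : ℤ)⟧')) (hK : K ∈ W)
    (hψ : FactorsThrough W ψ) : FactorsThrough W f := by
  obtain ⟨K', hK', p, q, rfl⟩ := hψ
  obtain ⟨E, j, k, hE⟩ := distinguished_cocone_triangle₂ (δ ≫ p⟦(1 : ℤ)⟧')
  obtain ⟨g, hg, -⟩ : ∃ g : C ⟶ E, i ≫ g = p ≫ j ∧ a ≫ 𝟙 K = g ≫ k :=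
    complete_distinguished_triangle_morphism₂ _ _ hF hE p (𝟙 K)
      (Category.id_comp (δ ≫ p⟦(1 : ℤ)⟧')).symm
  obtain ⟨m, hm, -⟩ : ∃ m : E ⟶ Z, j ≫ m = q ≫ y ∧ k ≫ b = m ≫ z :=
    complete_distinguished_triangle_morphism₂ _ _ hE (rot_of_distTriang _ hX) q b (by
      change (δ ≫ p⟦(1 : ℤ)⟧') ≫ q⟦(1 : ℤ)⟧' = b ≫ (-x⟦(1 : ℤ)⟧')
      rw [Category.assoc, ← Functor.map_comp, hψb])
  have hi : i ≫ (f - g ≫ m) = 0 := by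
    rw [Preadditive.comp_sub, hψf, reassoc_of% hg, hm, Category.assoc, sub_self]
  obtain ⟨t, ht⟩ : ∃ t : K ⟶ Z, f - g ≫ m = a ≫ t := Triangle.yoneda_exact₂ _ hF _ hi
  rw [eq_add_of_sub_eq ht]
  exact add hW ⟨K, hK, a, t, rfl⟩ ⟨E, hW _ hE hK' hK, g, m, rfl⟩

variable (hW' : ∀ K ∈ W, IsSmallObj.{w} K)
include hW'

lemma of_distinguished (Δ : Triangle T) (hΔ : Δ ∈ distTriang T)
    (h₁ : ∀ C, IsSmallObj.{w} C → ∀ f : C ⟶ Δ.obj₁⟦(1 : ℤ)⟧, FactorsThrough W f)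
    (h₂ : ∀ C, IsSmallObj.{w} C → ∀ f : C ⟶ Δ.obj₂, FactorsThrough W f)
    {C : T} (hC : IsSmallObj.{w} C) (f : C ⟶ Δ.obj₃) : FactorsThrough W f := by
  obtain ⟨K, hK, a, b, hab⟩ := h₁ C hC (f ≫ Δ.mor₃)
  obtain ⟨F, i, δ, hF⟩ := distinguished_cocone_triangle₁ a
  obtain ⟨ψ, hψf, hψb⟩ :=
    complete_distinguished_triangle_morphism₁ _ _ hF (rot_of_distTriang _ hΔ) f b hab
  exact of_fiber hW hF hΔ hψf hψb hK (h₂ F (hC.obj₁ _ hF (hW' K hK)) ψ)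

omit hW' in
lemma of_isColimit (h₀ : (0 : T) ∈ W) {ι : Type w} {f : ι → T} {c : Cofan f} (hc : IsColimit c)
    {C : T} (hC : IsSmallObj.{w} C) (h : ∀ i (g : C ⟶ f i), FactorsThrough W g)
    (x : C ⟶ c.pt) : FactorsThrough W x := by
  classical
  obtain ⟨F, hF⟩ := hC f c hc x
  rw [← hF]
  clear hF
  induction F using Finset.induction_on with
  | empty => exact ⟨0, h₀, 0, 0, by rw [cofanTruncation_empty, zero_comp, comp_zero]⟩
  | insert k F hk ih =>
    obtain ⟨π, hπ⟩ := cofanTruncation_insert hc hk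
    rw [hπ, Preadditive.comp_add, ← Category.assoc x π]
    exact add hW ih ((h k (x ≫ π)).comp _)

lemma isLocalizingSub (h₀ : (0 : T) ∈ W) (hshift : ∀ K ∈ W, ∀ n : ℤ, K⟦n⟧ ∈ W) :
    IsLocalizingSub.{w} {Y : T | ∀ C, IsSmallObj.{w} C → ∀ f : C ⟶ Y, FactorsThrough W f} := by
  have shift_mem (n : ℤ) {Y : T} (hY : ∀ C, IsSmallObj.{w} C → ∀ f : C ⟶ Y, FactorsThrough W f)
      (C : T) (hC : IsSmallObj.{w} C) (f : C ⟶ Y⟦n⟧) : FactorsThrough W f := by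
    let e : (C⟦-n⟧)⟦n⟧ ≅ C := shiftNegShift C n
    obtain ⟨g, hg⟩ := (shiftFunctor T n).map_surjective (e.hom ≫ f)
    obtain ⟨K, hK, a, b, rfl⟩ := hY _ (hC.shift (-n)) g
    refine ⟨K⟦n⟧, hshift K hK n, e.inv ≫ a⟦n⟧', b⟦n⟧', ?_⟩
    rw [Category.assoc, ← Functor.map_comp, hg, Iso.inv_hom_id_assoc]
  exact {
    zero_mem C _ f := ⟨0, h₀, 0, 0, (isZero_zero T).eq_of_tgt _ _⟩
    mem_of_iso e hY C hC f := by simpa using (hY C hC (f ≫ e.inv)).comp e.hom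
    shift_mem := shift_mem
    cone_mem Δ hΔ h₁ h₂ C hC f := of_distinguished hW hW' Δ hΔ (shift_mem 1 h₁) h₂ hC f
    coprod_mem f c hc hf C hC x := of_isColimit hW h₀ hc hC (fun i => hf i C hC) x }

end FactorsThrough

end FactorsThrough

section SmallComplexes

variable {R : Type u} [CommRing R]

lemma exists_cofanTruncation_apply_eq {ι : Type u} {f : ι → ModuleCat.{u} R} {c : Cofan f}
    (hc : IsColimit c) (y : c.pt) : ∃ F, cofanTruncation hc F y = y := by
  classical
  let e := hc.coconePointUniqueUpToIso (ModuleCat.coproductCoconeIsColimit f)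
  obtain ⟨z, rfl⟩ : ∃ z : ⨁ k, f k, e.inv z = y := ⟨e.hom y, by simp⟩
  let ε : (⨁ k, f k) →ₗ[R] c.pt := e.inv.hom
  let τ : c.pt →ₗ[R] c.pt := (cofanTruncation hc z.support).hom
  have hε (k : ι) (m : f k) : ε (of (fun k => f k) k m) = c.inj k m :=
    ConcreteCategory.congr_hom (hc.comp_coconePointUniqueUpToIso_inv
      (ModuleCat.coproductCoconeIsColimit f) ⟨k⟩) m
  refine ⟨z.support, ?_⟩
  calc τ (ε z) = ∑ k ∈ z.support, τ (ε (of _ k (z k))) := by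
        rw [← map_sum, ← map_sum, DirectSum.sum_support_of]
    _ = ∑ k ∈ z.support, ε (of _ k (z k)) := Finset.sum_congr rfl fun k hk => by
        rw [hε]
        exact ConcreteCategory.congr_hom (inj_cofanTruncation_of_mem hc hk) (z k)
    _ = ε z := by rw [← map_sum, DirectSum.sum_support_of]

lemma isSmallObj_of_moduleFinite (M : ModuleCat.{u} R) [Module.Finite R M] :
    IsSmallObj.{u} M := by
  intro ι f c hc x
  classical
  obtain ⟨s, hs⟩ := (‹Module.Finite R M›).fg_top
  choose F hF using fun m : M => exists_cofanTruncation_apply_eq hc (x m)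
  refine ⟨s.biUnion F, ModuleCat.hom_ext (LinearMap.ext_on hs fun m hm => ?_)⟩
  change (x ≫ _) m = x m
  rw [ModuleCat.comp_apply, ← hF m, ← ModuleCat.comp_apply,
    cofanTruncation_comp_of_subset hc (Finset.subset_biUnion_of_mem F hm)]

lemma isSmallObj_of_eval {A : Type u} [Category.{v} A] [Preadditive A] [HasZeroObject A]
    [HasCoproducts.{w} A] {K : CochainComplex A ℤ} (hK : ∀ i, IsSmallObj.{w} (K.X i))
    (N : Finset ℤ) (hN : ∀ i ∉ N, IsZero (K.X i)) : IsSmallObj.{w} K := by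
  intro ι f c hc x
  classical
  have hci (i : ℤ) : IsColimit (Cofan.mk (c.pt.X i) fun k => (c.inj k).f i) :=
    Cofan.isColimitMapCoconeEquiv _ _ _
      (isColimitOfPreserves (HomologicalComplex.eval A (ComplexShape.up ℤ) i) hc)
  have hT (F : Finset ι) (i : ℤ) : (cofanTruncation hc F).f i = cofanTruncation (hci i) F :=
    map_cofanTruncation hc (HomologicalComplex.eval A (ComplexShape.up ℤ) i) (hci i) F
  choose F hF using fun i => hK i _ _ (hci i) (x.f i)
  refine ⟨N.biUnion F, HomologicalComplex.hom_ext _ _ fun i => ?_⟩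
  by_cases hi : i ∈ N
  · rw [HomologicalComplex.comp_f, hT, ← hF i, Category.assoc,
      cofanTruncation_comp_of_subset _ (Finset.subset_biUnion_of_mem F hi)]
  · exact (hN i hi).eq_of_src _ _

end SmallComplexes

section FiniteFree

open DerivedCategory

variable {R : Type u} [CommRing R] {P P' : CochainComplex (ModuleCat.{u} R) ℤ}

/-- Bounded complexes of finite free modules. -/
structure IsBoundedFiniteFree (P : CochainComplex (ModuleCat.{u} R) ℤ) : Prop where
  free (i : ℤ) : Module.Free R (P.X i)
  finite (i : ℤ) : Module.Finite R (P.X i)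
  exists_finset : ∃ N : Finset ℤ, ∀ i ∉ N, Subsingleton (P.X i)

namespace IsBoundedFiniteFree

lemma single (M : ModuleCat.{u} R) [Module.Free R M] [Module.Finite R M] (n : ℤ) :
    IsBoundedFiniteFree ((HomologicalComplex.single _ (ComplexShape.up ℤ) n).obj M) := by
  have e : M ≃ₗ[R] ((HomologicalComplex.single _ (ComplexShape.up ℤ) n).obj M).X n :=
    (HomologicalComplex.singleObjXSelf (ComplexShape.up ℤ) n M).symm.toLinearEquiv
  have h (i : ℤ) (hi : i ≠ n) :
      Subsingleton (((HomologicalComplex.single _ (ComplexShape.up ℤ) n).obj M).X i) :=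
    ModuleCat.subsingleton_of_isZero (HomologicalComplex.isZero_single_obj_X _ n M i hi)
  refine ⟨fun i => ?_, fun i => ?_, {n}, fun i hi => h i (by simpa using hi)⟩ <;>
  obtain rfl | hi := eq_or_ne i n
  · exact Module.Free.of_equiv e
  · have := h i hi
    infer_instance
  · exact Module.Finite.equiv e
  · have := h i hi
    infer_instance

lemma shift (hP : IsBoundedFiniteFree P) (n : ℤ) : IsBoundedFiniteFree (P⟦n⟧) := by
  obtain ⟨N, hN⟩ := hP.exists_finset
  exact ⟨fun i => hP.free (i + n), fun i => hP.finite (i + n), N.image (· - n), fun i hi =>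
    hN (i + n) fun h => hi (Finset.mem_image.2 ⟨i + n, h, by ring⟩)⟩

lemma mappingCone (hP : IsBoundedFiniteFree P) (hP' : IsBoundedFiniteFree P') (f : P ⟶ P') :
    IsBoundedFiniteFree (CochainComplex.mappingCone f) := by
  obtain ⟨N, hN⟩ := hP.exists_finset
  obtain ⟨N', hN'⟩ := hP'.exists_finset
  have e (i : ℤ) : (P.X (i + 1) × P'.X i) ≃ₗ[R] (CochainComplex.mappingCone f).X i :=
    (HomologicalComplex.homotopyCofiber.XIsoBiprod f i (i + 1) rfl ≪≫
      ModuleCat.biprodIsoProd _ _).symm.toLinearEquiv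
  have := hP.free
  have := hP'.free
  have := hP.finite
  have := hP'.finite
  refine ⟨fun i => .of_equiv (e i), fun i => .equiv (e i), N.image (· - 1) ∪ N', fun i hi => ?_⟩
  have := hN (i + 1) fun h =>
    hi (Finset.mem_union_left _ (Finset.mem_image.2 ⟨i + 1, h, by ring⟩))
  have := hN' i fun h => hi (Finset.mem_union_right _ h)
  exact (e i).symm.subsingleton

lemma isSmallObj (hP : IsBoundedFiniteFree P) : IsSmallObj.{u} P := by
  obtain ⟨N, hN⟩ := hP.exists_finset
  have := hP.finite
  refine isSmallObj_of_eval (fun i => isSmallObj_of_moduleFinite _) N fun i hi => ?_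
  have := hN i hi
  exact ModuleCat.isZero_of_subsingleton _

lemma isKProjective (hP : IsBoundedFiniteFree P) : P.IsKProjective := by
  obtain ⟨N, hN⟩ := hP.exists_finset
  obtain ⟨b, hb⟩ := N.bddAbove
  have : P.IsStrictlyLE b := by
    rw [CochainComplex.isStrictlyLE_iff]
    intro i hi
    have := hN i fun h => absurd (hb h) (by lia)
    exact ModuleCat.isZero_of_subsingleton _
  have (i : ℤ) : Projective (P.X i) := by
    have := hP.free i
    exact (IsProjective.iff_projective (P.X i)).1 inferInstance
  exact CochainComplex.isKProjective_of_projective P b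

variable [HasDerivedCategory.{w'} (ModuleCat.{u} R)]

lemma exists_Q_map_eq (hP : IsBoundedFiniteFree P) {Y : CochainComplex (ModuleCat.{u} R) ℤ}
    (f : Q.obj P ⟶ Q.obj Y) : ∃ φ : P ⟶ Y, Q.map φ = f := by
  have := hP.isKProjective
  obtain ⟨g, hg⟩ := (CochainComplex.IsKProjective.Qh_map_bijective P
    ((HomotopyCategory.quotient _ _).obj Y)).surjective
    ((quotientCompQhIso _).hom.app P ≫ f ≫ (quotientCompQhIso _).inv.app Y)
  obtain ⟨φ, rfl⟩ := (HomotopyCategory.quotient _ _).map_surjective g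
  refine ⟨φ, ?_⟩
  rw [← cancel_epi ((quotientCompQhIso _).hom.app P), ← quotientCompQhIso_hom_naturality, hg]
  simp

lemma isSmallObj_Q_obj (hP : IsBoundedFiniteFree P) : IsSmallObj.{u} (Q.obj P) := by
  intro ι f c hc x
  let X (k : ι) := Q.objPreimage (f k)
  have hX := coproductIsCoproduct X
  have hQ : IsColimit (Cofan.mk (Q.obj (∐ X)) fun k => Q.map (Sigma.ι X k)) :=
    Cofan.isColimitMapCoconeEquiv _ _ _ (isColimitOfPreserves Q hX)
  let e (k : ι) : f k ≅ Q.obj (X k) := (Q.objObjPreimageIso (f k)).symm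
  let α : Discrete.functor f ≅ Discrete.functor fun k => Q.obj (X k) :=
    Discrete.natIso fun k => e k.as
  let θ := hc.coconePointsIsoOfNatIso hQ α
  have hθ (k : ι) : c.inj k ≫ θ.hom = (e k).hom ≫ Q.map (Sigma.ι X k) :=
    hc.comp_coconePointsIsoOfNatIso_hom hQ α ⟨k⟩
  obtain ⟨φ, hφ⟩ := hP.exists_Q_map_eq (x ≫ θ.hom)
  obtain ⟨F, hF⟩ := hP.isSmallObj _ _ hX φ
  refine ⟨F, ?_⟩
  rw [← cancel_mono θ.hom, Category.assoc, cofanTruncation_naturality hc hQ _ _ hθ,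
    ← Category.assoc, ← hφ]
  have hQF := map_cofanTruncation hX Q hQ F
  exact (congrArg (Q.map φ ≫ ·) hQF).symm.trans ((Q.map_comp _ _).symm.trans (congrArg Q.map hF))

end IsBoundedFiniteFree

variable [HasDerivedCategory.{w'} (ModuleCat.{u} R)]

variable (R) in
/-- The objects of `D(R)` represented by a bounded complex of finite free modules. -/
def boundedFiniteFreeObjects : Set (DerivedCategory (ModuleCat.{u} R)) :=
  {X | ∃ P, IsBoundedFiniteFree P ∧ Nonempty (X ≅ Q.obj P)}

lemma smod_mem_boundedFiniteFreeObjects (M : ModuleCat.{u} R) [Module.Free R M]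
    [Module.Finite R M] : smod R M ∈ boundedFiniteFreeObjects R :=
  ⟨_, .single M 0, ⟨(singleFunctorIsoCompQ (ModuleCat.{u} R) 0).app _⟩⟩

lemma shift_mem_boundedFiniteFreeObjects (X : DerivedCategory (ModuleCat.{u} R))
    (hX : X ∈ boundedFiniteFreeObjects R) (n : ℤ) : X⟦n⟧ ∈ boundedFiniteFreeObjects R := by
  obtain ⟨P, hP, ⟨e⟩⟩ := hX
  exact ⟨P⟦n⟧, hP.shift n, ⟨(shiftFunctor _ n).mapIso e ≪≫ ((Q.commShiftIso n).app P).symm⟩⟩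

lemma obj₃_mem_boundedFiniteFreeObjects (Δ : Triangle (DerivedCategory (ModuleCat.{u} R)))
    (hΔ : Δ ∈ distTriang _) (h₁ : Δ.obj₁ ∈ boundedFiniteFreeObjects R)
    (h₂ : Δ.obj₂ ∈ boundedFiniteFreeObjects R) : Δ.obj₃ ∈ boundedFiniteFreeObjects R := by
  obtain ⟨P, hP, ⟨a⟩⟩ := h₁
  obtain ⟨P', hP', ⟨b⟩⟩ := h₂
  obtain ⟨φ, hφ⟩ := hP.exists_Q_map_eq (a.inv ≫ Δ.mor₁ ≫ b.hom)
  let e := isoTriangleOfIso₁₂ Δ _ hΔ (mappingCone_triangle_distinguished φ) a b (by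
    change Δ.mor₁ ≫ b.hom = a.hom ≫ Q.map φ
    rw [hφ, Iso.hom_inv_id_assoc])
  exact ⟨_, hP.mappingCone hP' φ, ⟨Triangle.π₃.mapIso e⟩⟩

lemma obj₂_mem_boundedFiniteFreeObjects (Δ : Triangle (DerivedCategory (ModuleCat.{u} R)))
    (hΔ : Δ ∈ distTriang _) (h₁ : Δ.obj₁ ∈ boundedFiniteFreeObjects R)
    (h₃ : Δ.obj₃ ∈ boundedFiniteFreeObjects R) : Δ.obj₂ ∈ boundedFiniteFreeObjects R :=
  obj₃_mem_boundedFiniteFreeObjects _ (inv_rot_of_distTriang _ hΔ)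
    (shift_mem_boundedFiniteFreeObjects _ h₃ (-1)) h₁

lemma isSmallObj_of_mem_boundedFiniteFreeObjects {X : DerivedCategory (ModuleCat.{u} R)}
    (hX : X ∈ boundedFiniteFreeObjects R) : IsSmallObj.{u} X := by
  obtain ⟨P, hP, ⟨e⟩⟩ := hX
  exact hP.isSmallObj_Q_obj.of_iso e.symm

lemma mem_Loc_smod_ring (X : DerivedCategory (ModuleCat.{u} R)) :
    X ∈ Loc.{u} {smod R (ModuleCat.of R R)} := by
  have hL := isLocalizingSub_Loc.{u} {smod R (ModuleCat.of R R)}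
  have hR := (hL.ofModule_mem_periodicClass_iff _).2 (subset_Loc _ rfl)
  exact hL.mem_of_iso (Q.objObjPreimageIso X) <| (hL.fold_mem_periodicClass_iff _).1 <|
    hL.isLocalizing_periodicClass.mem_of_self hR _

lemma IsSmallObj.exists_retract {C : DerivedCategory (ModuleCat.{u} R)} (hC : IsSmallObj.{u} C) :
    ∃ P, IsBoundedFiniteFree P ∧ ∃ (s : C ⟶ Q.obj P) (r : Q.obj P ⟶ C), s ≫ r = 𝟙 C := by
  have hR := smod_mem_boundedFiniteFreeObjects (ModuleCat.of R R)
  have h₀ : 0 ∈ boundedFiniteFreeObjects R :=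
    obj₃_mem_boundedFiniteFreeObjects _ (contractible_distinguished _) hR hR
  have hL := FactorsThrough.isLocalizingSub.{u} obj₂_mem_boundedFiniteFreeObjects
    (fun _ => isSmallObj_of_mem_boundedFiniteFreeObjects) h₀ shift_mem_boundedFiniteFreeObjects
  obtain ⟨K, ⟨P, hP, ⟨e⟩⟩, s, r, hsr⟩ := Loc_subset (S := {smod R (ModuleCat.of R R)}) hL
    (Set.singleton_subset_iff.2 fun _ _ f => ⟨_, hR, f, 𝟙 _, Category.comp_id f⟩)
    (mem_Loc_smod_ring C) C hC (𝟙 C)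
  exact ⟨P, hP, s ≫ e.hom, e.inv ≫ r, by simpa using hsr⟩

end FiniteFree

section RetractCone

variable {T : Type u} [Category.{v} T] [Preadditive T] [HasZeroObject T]
  [HasShift T ℤ] [∀ n : ℤ, (shiftFunctor T n).Additive] [Pretriangulated T]

lemma isIso_of_mor₂_comp_eq_of_comp_mor₃_eq {Δ : Triangle T} (hΔ : Δ ∈ distTriang T)
    {h : Δ.obj₃ ⟶ Δ.obj₃} (h₂ : Δ.mor₂ ≫ h = Δ.mor₂) (h₃ : h ≫ Δ.mor₃ = Δ.mor₃) : IsIso h :=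
  isIso₃_of_isIso₁₂ (Triangle.homMk Δ Δ (𝟙 _) (𝟙 _) h (by simp) (by simpa using h₂)
    (by simpa using h₃.symm)) hΔ hΔ (inferInstance : IsIso (𝟙 Δ.obj₁))
    (inferInstance : IsIso (𝟙 Δ.obj₂))

variable {C K Z : T} {s : C ⟶ K} {r : K ⟶ C} (hsr : s ≫ r = 𝟙 C) {j : K ⟶ Z}
  {δ : Z ⟶ K⟦(1 : ℤ)⟧} (hΔ : Triangle.mk (𝟙 K - r ≫ s) j δ ∈ distTriang T)
include hsr hΔ

lemma exists_comp_eq_of_retract : ∃ t : Z ⟶ C, j ≫ t = r := by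
  obtain ⟨t, ht⟩ := Triangle.yoneda_exact₂ _ hΔ r (by
    change (𝟙 K - r ≫ s) ≫ r = 0
    rw [Preadditive.sub_comp, Category.assoc, hsr, Category.id_comp, Category.comp_id, sub_self])
  exact ⟨t, ht.symm⟩

/-- The cone of the complementary idempotent `1 - r ≫ s` is in fact `C ⊞ C⟦1⟧`. -/
lemma exists_retract_biprod_shift :
    ∃ (a : Z ⟶ C ⊞ C⟦(1 : ℤ)⟧) (b : C ⊞ C⟦(1 : ℤ)⟧ ⟶ Z), a ≫ b = 𝟙 Z := by
  obtain ⟨t, ht⟩ := exists_comp_eq_of_retract hsr hΔ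
  obtain ⟨v, hv⟩ : ∃ v : C⟦(1 : ℤ)⟧ ⟶ Z, s⟦(1 : ℤ)⟧' = v ≫ δ := by
    refine Triangle.coyoneda_exact₁ _ hΔ (s⟦(1 : ℤ)⟧') ?_
    change s⟦(1 : ℤ)⟧' ≫ (𝟙 K - r ≫ s)⟦(1 : ℤ)⟧' = 0
    rw [← Functor.map_comp, Preadditive.comp_sub, reassoc_of% hsr, Category.comp_id, sub_self,
      Functor.map_zero]
  have hjδ : j ≫ δ = 0 := comp_distTriang_mor_zero₂₃ _ hΔ
  have hj : r ≫ s ≫ j = j := by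
    have : (𝟙 K - r ≫ s) ≫ j = 0 := comp_distTriang_mor_zero₁₂ _ hΔ
    rw [Preadditive.sub_comp, Category.id_comp, sub_eq_zero, Category.assoc] at this
    exact this.symm
  have hδ : δ ≫ r⟦(1 : ℤ)⟧' ≫ s⟦(1 : ℤ)⟧' = δ := by
    have : δ ≫ (𝟙 K - r ≫ s)⟦(1 : ℤ)⟧' = 0 := comp_distTriang_mor_zero₃₁ _ hΔ
    rw [Functor.map_sub, CategoryTheory.Functor.map_id, Preadditive.comp_sub, Category.comp_id,
      sub_eq_zero, Functor.map_comp] at this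
    exact this.symm
  let h : Z ⟶ Z := t ≫ s ≫ j + δ ≫ r⟦(1 : ℤ)⟧' ≫ v
  have : IsIso h := isIso_of_mor₂_comp_eq_of_comp_mor₃_eq hΔ
    (by
      change j ≫ h = j
      rw [Preadditive.comp_add, reassoc_of% ht, hj, reassoc_of% hjδ, zero_comp, add_zero])
    (by
      change h ≫ δ = δ
      simp only [h, Preadditive.add_comp, Category.assoc]
      rw [hjδ, comp_zero, comp_zero, zero_add, ← hv, hδ])
  refine ⟨biprod.lift t (δ ≫ r⟦(1 : ℤ)⟧'), biprod.desc (s ≫ j) v ≫ inv h, ?_⟩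
  rw [← Category.assoc, biprod.lift_desc, IsIso.comp_inv_eq, Category.id_comp, Category.assoc]

lemma IsLocalizingSub.mem_iff_of_retract [HasCoproducts.{w} T] {L : Set T}
    (hL : IsLocalizingSub.{w} L) : C ∈ L ↔ Z ∈ L := by
  obtain ⟨t, ht⟩ := exists_comp_eq_of_retract hsr hΔ
  obtain ⟨a, b, hab⟩ := exists_retract_biprod_shift hsr hΔ
  refine ⟨fun h => hL.mem_of_retract a b hab ?_,
    hL.mem_of_retract (s ≫ j) t (by rw [Category.assoc, ht, hsr])⟩
  exact hL.obj₂_mem _ (binaryBiproductTriangle_distinguished C (C⟦(1 : ℤ)⟧)) h (hL.shift_mem 1 h)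

end RetractCone

open DerivedCategory in
lemma IsSmallObj.exists_isBoundedFiniteFree_mem_iff {R : Type u} [CommRing R]
    [HasDerivedCategory.{w'} (ModuleCat.{u} R)] {C : DerivedCategory (ModuleCat.{u} R)}
    (hC : IsSmallObj.{u} C) :
    ∃ P, IsBoundedFiniteFree P ∧ ∀ L, IsLocalizingSub.{u} L → (C ∈ L ↔ Q.obj P ∈ L) := by
  obtain ⟨P, hP, s, r, hsr⟩ := hC.exists_retract
  obtain ⟨φ, hφ⟩ := hP.exists_Q_map_eq (𝟙 _ - r ≫ s)
  have hΔ : Triangle.mk (Q.map φ) _ _ ∈ distTriang _ := mappingCone_triangle_distinguished φ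
  rw [hφ] at hΔ
  exact ⟨_, hP.mappingCone hP φ, fun L hL => hL.mem_iff_of_retract hsr hΔ⟩

lemma dfinsupp_basis_apply {S ι : Type*} [Semiring S] [DecidableEq ι] {M : ι → Type*}
    [∀ i, AddCommMonoid (M i)] [∀ i, Module S (M i)] {κ : ι → Type*}
    (b : ∀ i, Module.Basis (κ i) S (M i)) (k : Σ i, κ i) :
    DFinsupp.basis b k = DFinsupp.single k.1 (b k.1 k.2) := by
  apply (DFinsupp.basis b).repr.symm_apply_eq.2
  change Finsupp.single k 1 = (sigmaFinsuppLequivDFinsupp S).symm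
    (DFinsupp.mapRange.linearEquiv (fun i => (b i).repr) (DFinsupp.single k.1 (b k.1 k.2)))
  simp only [DFinsupp.mapRange.linearEquiv_apply, DFinsupp.mapRange_single,
    Module.Basis.repr_self]
  exact (LinearEquiv.eq_symm_apply _).2 (sigmaFinsuppEquivDFinsupp_single k 1)

section FiniteFreeMatrix

open DifferentialModule

variable {R : Type u} [CommRing R]

lemma GradedDifferential.exists_isNoetherianRing_map_eq {ι : Type} [Fintype ι]
    (D : GradedDifferential ι R) :
    ∃ (A : Type u) (_ : CommRing A) (_ : IsNoetherianRing A) (φ : A →+* R)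
      (D' : GradedDifferential ι A), D'.map φ = D := by
  let A := Subring.closure (Set.range fun k : ι × ι => D.matrix k.1 k.2)
  have hA : IsNoetherianRing A := is_noetherian_subring_closure _ (Set.finite_range _)
  let m : Matrix ι ι A := .of fun a b => ⟨D.matrix a b, Subring.subset_closure ⟨(a, b), rfl⟩⟩
  have hm : m.map A.subtype = D.matrix := rfl
  let D' : GradedDifferential ι A :=
    { matrix := m
      deg := D.deg
      matrix_mul_matrix := Matrix.map_injective A.subtype_injective <| by
        simp only [Matrix.map_mul, hm, D.matrix_mul_matrix, Matrix.map_zero _ (map_zero A.subtype)]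
      deg_eq a b h := D.deg_eq a b fun h₀ => h (Subtype.ext h₀) }
  exact ⟨A, inferInstance, hA, A.subtype, D', rfl⟩

lemma GradedDifferential.exists_ideal_forall_mem_iff {ι : Type} [Fintype ι]
    (D : GradedDifferential ι R) :
    ∃ I : Ideal R, I.FG ∧ ∀ P, IsLocalizing P →
      (D.toDifferentialModule ∈ P ↔ ofModule R (R ⧸ I) ∈ P) := by
  classical
  obtain ⟨A, _, _, φ, D, rfl⟩ := D.exists_isNoetherianRing_map_eq
  exact ⟨D.nullhomotopyIdeal.map φ, .map (IsNoetherian.noetherian _) φ, fun P hP =>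
    D.map_toDifferentialModule_mem_iff hP⟩

namespace IsBoundedFiniteFree

variable {P : CochainComplex (ModuleCat.{u} R) ℤ}

lemma exists_basis (hP : IsBoundedFiniteFree P) :
    ∃ n : ℤ → ℕ, Finite (Σ i, Fin (n i)) ∧ ∀ i, Nonempty (Module.Basis (Fin (n i)) R (P.X i)) := by
  classical
  obtain ⟨N, hN⟩ := hP.exists_finset
  have h (i : ℤ) : ∃ n : ℕ, (i ∉ N → n = 0) ∧ Nonempty (Module.Basis (Fin n) R (P.X i)) := by
    by_cases hi : i ∈ N
    · have := hP.free i
      have := hP.finite i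
      exact ⟨_, fun h => absurd hi h,
        ⟨(Module.Free.chooseBasis R (P.X i)).reindex (Fintype.equivFin _)⟩⟩
    · have := hN i hi
      exact ⟨0, fun _ => rfl, ⟨Module.Basis.empty _⟩⟩
  choose n hn hb using h
  refine ⟨n, ?_, hb⟩
  have hm (x : Σ i, Fin (n i)) : x.1 ∈ N := by
    by_contra hx
    exact (Fin.cast (hn _ hx) x.2).elim0
  refine Finite.of_injective (β := Σ i : N, Fin (n i)) (fun x => ⟨⟨x.1, hm x⟩, x.2⟩) ?_
  rintro ⟨i, x⟩ ⟨j, y⟩ h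
  cases h
  rfl

lemma exists_gradedDifferential (hP : IsBoundedFiniteFree P) :
    ∃ (ι : Type) (_ : Fintype ι) (D : GradedDifferential ι R)
      (e : fold P ≃ₗ[R] D.toDifferentialModule), IsChainMap e.toLinearMap := by
  classical
  obtain ⟨n, hn, hb⟩ := hP.exists_basis
  have b (i : ℤ) := (hb i).some
  let B : Module.Basis (Σ i, Fin (n i)) R (⨁ i, P.X i) := DFinsupp.basis b
  have := Fintype.ofFinite (Σ i, Fin (n i))
  have hB (a c : Σ i, Fin (n i)) (h : LinearMap.toMatrix B B (foldD P) a c ≠ 0) :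
      a.1 = c.1 + 1 := by
    contrapose! h
    have hBc : B c = lof R ℤ (fun i => P.X i) c.1 (b c.1 c.2) := dfinsupp_basis_apply b c
    rw [LinearMap.toMatrix_apply, hBc, foldD_lof P rfl]
    change (b a.1).repr (of (fun i => P.X i) (c.1 + 1) _ a.1) a.2 = 0
    rw [of_eq_of_ne _ _ _ h, map_zero, Finsupp.zero_apply]
  let D : GradedDifferential (Σ i, Fin (n i)) R :=
    { matrix := LinearMap.toMatrix B B (foldD P)
      deg := Sigma.fst
      matrix_mul_matrix := by
        rw [← LinearMap.toMatrix_comp, show foldD P ∘ₗ foldD P = 0 from LinearMap.ext (fold P).d_d,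
          map_zero]
      deg_eq := hB }
  exact ⟨_, _, D, B.equivFun, fun x => (LinearMap.toMatrix_mulVec_repr B B (foldD P) x).symm⟩

end IsBoundedFiniteFree

end FiniteFreeMatrix

/-- Theorem: for any compact object `C` of `D(R)` (i.e. perfect complex), there is a
finitely generated ideal `I ⊆ R` such that `Loc(C) = Loc(R/I)`. -/
theorem loc_compact_eq_loc_quotient (R : Type u) [CommRing R]
    [HasDerivedCategory.{w'} (ModuleCat.{u} R)]
    (C : DerivedCategory (ModuleCat.{u} R)) (hC : IsCompactObj.{u} C) :
    ∃ I : Ideal R, I.FG ∧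
      Loc.{u} {C} = Loc.{u} {smod R (ModuleCat.of R (R ⧸ I))} := by
  obtain ⟨P, hP, hCP⟩ := hC.isSmallObj.exists_isBoundedFiniteFree_mem_iff
  obtain ⟨ι, _, D, e, he⟩ := hP.exists_gradedDifferential
  obtain ⟨I, hI, hDI⟩ := D.exists_ideal_forall_mem_iff
  have key (L) (hL : IsLocalizingSub.{u} L) : C ∈ L ↔ smod R (ModuleCat.of R (R ⧸ I)) ∈ L :=
    calc C ∈ L
      _ ↔ DerivedCategory.Q.obj P ∈ L := hCP L hL
      _ ↔ fold P ∈ periodicClass L := (hL.fold_mem_periodicClass_iff P).symm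
      _ ↔ D.toDifferentialModule ∈ periodicClass L :=
        hL.isLocalizing_periodicClass.mem_iff_of_equiv e he
      _ ↔ DifferentialModule.ofModule R (R ⧸ I) ∈ periodicClass L :=
        hDI _ hL.isLocalizing_periodicClass
      _ ↔ smod R (ModuleCat.of R (R ⧸ I)) ∈ L := hL.ofModule_mem_periodicClass_iff (.of R (R ⧸ I))
  refine ⟨I, hI, Set.Subset.antisymm ?_ ?_⟩
  · exact Loc_subset (isLocalizingSub_Loc _) (Set.singleton_subset_iff.2
      ((key _ (isLocalizingSub_Loc _)).2 (subset_Loc _ rfl)))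
  · exact Loc_subset (isLocalizingSub_Loc _) (Set.singleton_subset_iff.2
      ((key _ (isLocalizingSub_Loc _)).1 (subset_Loc _ rfl)))
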